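/- arXiv:1605.06429 — 6 statements merged into one kernel-verified Lean document; each statement's English description precedes it below -/
import Mathlib

section
/- Existence and characterisation of the worst-case volatility (Lemma on the optimal volatility): for every L > 0 there exist constants C₁ > 0 and ψ₁ > 0 such that for every (t,s,y) ∈ D, every ϑ̃ ∈ [−L,L], and every ψ ∈ (0,ψ₁), the function ς ↦ H^ψ(t,s,y; V̄_s(t,s) + ϑ̃ψ, ς) on [0,K] attains its minimum over [0,K] at some point ς* lying in the open interval (0,K), which satisfies the first-order condition ∂H^ψ/∂ς (t,s,y; V̄_s(t,s) + ϑ̃ψ, ς*) = 0 and the estimate |ς* − σ^ψ(t,s,y)| ≤ C₁ ψ². -/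
open Set

/-- The data of the hedging problem with small uncertainty aversion: the constants
`T, K, ε, y_l, y_u`, the reference volatility `σ̄` (`sb`), the reference value `V̄` (`V`)
with its `s`-derivatives `Vs, Vss`, the penalty function `f` with its `ς`-derivatives
`f1, ..., f4`, the utility `U` with derivatives `U1, U2, U3`, and the correction terms
`w̃` (`wt`) and `ŵ` (`wh`) together with their partial derivatives. -/
structure HedgeData where
  T : ℝ
  K : ℝ
  eps : ℝ
  yl : ℝ
  yu : ℝ
  sb : ℝ → ℝ → ℝ
  V : ℝ → ℝ → ℝ
  Vs : ℝ → ℝ → ℝ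
  Vss : ℝ → ℝ → ℝ
  f : ℝ → ℝ → ℝ → ℝ → ℝ
  f1 : ℝ → ℝ → ℝ → ℝ → ℝ
  f2 : ℝ → ℝ → ℝ → ℝ → ℝ
  f3 : ℝ → ℝ → ℝ → ℝ → ℝ
  f4 : ℝ → ℝ → ℝ → ℝ → ℝ
  U : ℝ → ℝ
  U1 : ℝ → ℝ
  U2 : ℝ → ℝ
  U3 : ℝ → ℝ
  wt : ℝ → ℝ → ℝ → ℝ
  wtT : ℝ → ℝ → ℝ → ℝ
  wtS : ℝ → ℝ → ℝ → ℝ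
  wtY : ℝ → ℝ → ℝ → ℝ
  wtSS : ℝ → ℝ → ℝ → ℝ
  wtSY : ℝ → ℝ → ℝ → ℝ
  wtYY : ℝ → ℝ → ℝ → ℝ
  wh : ℝ → ℝ → ℝ → ℝ
  whT : ℝ → ℝ → ℝ → ℝ
  whS : ℝ → ℝ → ℝ → ℝ
  whY : ℝ → ℝ → ℝ → ℝ
  whSS : ℝ → ℝ → ℝ → ℝ
  whSY : ℝ → ℝ → ℝ → ℝ
  whYY : ℝ → ℝ → ℝ → ℝ

/-- The candidate value function `w^ψ(t,s,y) = U(y) - U'(y) w̃(t,s,y) ψ + U'(y) ŵ(t,s,y) ψ²`. -/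
noncomputable def HedgeData.wPsi (d : HedgeData) (ψ t s y : ℝ) : ℝ :=
  d.U y - d.U1 y * d.wt t s y * ψ + d.U1 y * d.wh t s y * ψ ^ 2

/-- Partial derivative `w^ψ_t`. -/
noncomputable def HedgeData.wPsiT (d : HedgeData) (ψ t s y : ℝ) : ℝ :=
  -(d.U1 y * d.wtT t s y) * ψ + d.U1 y * d.whT t s y * ψ ^ 2

/-- Partial derivative `w^ψ_y`. -/
noncomputable def HedgeData.wPsiY (d : HedgeData) (ψ t s y : ℝ) : ℝ :=
  d.U1 y - (d.U2 y * d.wt t s y + d.U1 y * d.wtY t s y) * ψ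
    + (d.U2 y * d.wh t s y + d.U1 y * d.whY t s y) * ψ ^ 2

/-- Partial derivative `w^ψ_ss`. -/
noncomputable def HedgeData.wPsiSS (d : HedgeData) (ψ t s y : ℝ) : ℝ :=
  -(d.U1 y * d.wtSS t s y) * ψ + d.U1 y * d.whSS t s y * ψ ^ 2

/-- Partial derivative `w^ψ_sy`. -/
noncomputable def HedgeData.wPsiSY (d : HedgeData) (ψ t s y : ℝ) : ℝ :=
  -(d.U2 y * d.wtS t s y + d.U1 y * d.wtSY t s y) * ψ
    + (d.U2 y * d.whS t s y + d.U1 y * d.whSY t s y) * ψ ^ 2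

/-- Partial derivative `w^ψ_yy`. -/
noncomputable def HedgeData.wPsiYY (d : HedgeData) (ψ t s y : ℝ) : ℝ :=
  d.U2 y - (d.U3 y * d.wt t s y + 2 * d.U2 y * d.wtY t s y + d.U1 y * d.wtYY t s y) * ψ
    + (d.U3 y * d.wh t s y + 2 * d.U2 y * d.whY t s y + d.U1 y * d.whYY t s y) * ψ ^ 2

/-- `σ̃(t,s,y) = σ̄(t,s) s² V̄_ss(t,s) / f''(t,s,y;σ̄(t,s))`. -/
noncomputable def HedgeData.sigmaTilde (d : HedgeData) (t s y : ℝ) : ℝ :=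
  d.sb t s * s ^ 2 * d.Vss t s / d.f2 t s y (d.sb t s)

/-- `θ̃(t,s,y) = w̃_s(t,s,y) + (U'(y)/U''(y)) w̃_sy(t,s,y)`. -/
noncomputable def HedgeData.thetaTilde (d : HedgeData) (t s y : ℝ) : ℝ :=
  d.wtS t s y + d.U1 y / d.U2 y * d.wtSY t s y

/-- The candidate volatility `σ^ψ = σ̄ + σ̃ ψ`. -/
noncomputable def HedgeData.sigmaPsi (d : HedgeData) (ψ t s y : ℝ) : ℝ :=
  d.sb t s + d.sigmaTilde t s y * ψ

/-- The candidate strategy `θ^ψ = V̄_s + θ̃ ψ`. -/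
noncomputable def HedgeData.thetaPsi (d : HedgeData) (ψ t s y : ℝ) : ℝ :=
  d.Vs t s + d.thetaTilde t s y * ψ

/-- The Hamiltonian `H^ψ(t,s,y;ϑ,ς)`. -/
noncomputable def HedgeData.Ham (d : HedgeData) (ψ t s y ϑ ς : ℝ) : ℝ :=
  1 / ψ * d.U1 y * d.f t s y ς
    + 1 / 2 * s ^ 2 * d.Vss t s * ((d.sb t s) ^ 2 - ς ^ 2) * d.wPsiY ψ t s y
    + 1 / 2 * ς ^ 2 * s ^ 2 *
      (d.wPsiSS ψ t s y + 2 * (ϑ - d.Vs t s) * d.wPsiSY ψ t s y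
        + (ϑ - d.Vs t s) ^ 2 * d.wPsiYY ψ t s y)

/-- The standing assumptions (Assumption 3.1 of the paper). -/
structure HedgeData.Assumptions (d : HedgeData) : Prop where
  hT : 0 < d.T
  hK : 1 < d.K
  heps : 0 < d.eps
  hy : d.yl < d.yu
  sb_mem : ∀ t ∈ Icc (0:ℝ) d.T, ∀ s ∈ Icc d.K⁻¹ d.K, d.sb t s ∈ Icc (0:ℝ) d.K
  sb_lb : ∀ t ∈ Icc (0:ℝ) d.T, ∀ s ∈ Ioo d.K⁻¹ d.K, d.eps ≤ d.sb t s
  sb_ub : ∀ t ∈ Icc (0:ℝ) d.T, ∀ s ∈ Ioo d.K⁻¹ d.K, d.sb t s ≤ d.K - d.eps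
  sb_bdry : ∀ t ∈ Icc (0:ℝ) d.T, d.sb t d.K⁻¹ = 0 ∧ d.sb t d.K = 0
  V_derivS : ∀ t ∈ Ioo (0:ℝ) d.T, ∀ s ∈ Ioo d.K⁻¹ d.K, HasDerivAt (d.V t) (d.Vs t s) s
  V_derivSS : ∀ t ∈ Ioo (0:ℝ) d.T, ∀ s ∈ Ioo d.K⁻¹ d.K, HasDerivAt (d.Vs t) (d.Vss t s) s
  Vss_cont : ∀ t ∈ Ioo (0:ℝ) d.T, ContinuousOn (d.Vss t) (Ioo d.K⁻¹ d.K)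
  Vss_bdd : ∀ t ∈ Ioo (0:ℝ) d.T, ∀ s ∈ Ioo d.K⁻¹ d.K, |s ^ 2 * d.Vss t s| ≤ d.K
  f_deriv1 : ∀ t s y ς : ℝ, HasDerivAt (d.f t s y) (d.f1 t s y ς) ς
  f_deriv2 : ∀ t s y ς : ℝ, HasDerivAt (d.f1 t s y) (d.f2 t s y ς) ς
  f_deriv3 : ∀ t s y ς : ℝ, HasDerivAt (d.f2 t s y) (d.f3 t s y ς) ς
  f_deriv4 : ∀ t s y ς : ℝ, HasDerivAt (d.f3 t s y) (d.f4 t s y ς) ς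
  f4_cont : ∀ t s y : ℝ, Continuous (d.f4 t s y)
  f_nonneg : ∀ t s y ς : ℝ, 0 ≤ ς → 0 ≤ d.f t s y ς
  f_min : ∀ t ∈ Ioo (0:ℝ) d.T, ∀ s ∈ Ioo d.K⁻¹ d.K, ∀ y ∈ Ioo d.yl d.yu,
    d.f t s y (d.sb t s) = 0 ∧ d.f1 t s y (d.sb t s) = 0
  f2_bdd : ∀ t ∈ Ioo (0:ℝ) d.T, ∀ s ∈ Ioo d.K⁻¹ d.K, ∀ y ∈ Ioo d.yl d.yu,
    ∀ ς ∈ Icc (0:ℝ) d.K, 1 / d.K ≤ d.f2 t s y ς ∧ d.f2 t s y ς ≤ d.K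
  f34_bdd : ∀ t ∈ Ioo (0:ℝ) d.T, ∀ s ∈ Ioo d.K⁻¹ d.K, ∀ y ∈ Ioo d.yl d.yu,
    ∀ ς ∈ Icc (0:ℝ) d.K, |d.f3 t s y ς| ≤ d.K ∧ |d.f4 t s y ς| ≤ d.K
  U_deriv1 : ∀ y : ℝ, HasDerivAt d.U (d.U1 y) y
  U_deriv2 : ∀ y : ℝ, HasDerivAt d.U1 (d.U2 y) y
  U_deriv3 : ∀ y : ℝ, HasDerivAt d.U2 (d.U3 y) y
  U3_cont : Continuous d.U3
  U1_pos : ∀ y : ℝ, 0 < d.U1 y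
  U2_neg : ∀ y : ℝ, d.U2 y < 0
  wt_cont : ContinuousOn (fun p : ℝ × ℝ × ℝ => d.wt p.1 p.2.1 p.2.2)
    (Icc 0 d.T ×ˢ Icc d.K⁻¹ d.K ×ˢ Icc d.yl d.yu)
  wh_cont : ContinuousOn (fun p : ℝ × ℝ × ℝ => d.wh p.1 p.2.1 p.2.2)
    (Icc 0 d.T ×ˢ Icc d.K⁻¹ d.K ×ˢ Icc d.yl d.yu)
  wt_deriv : ∀ t ∈ Ioo (0:ℝ) d.T, ∀ s ∈ Ioo d.K⁻¹ d.K, ∀ y ∈ Ioo d.yl d.yu,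
    HasDerivAt (fun t' => d.wt t' s y) (d.wtT t s y) t ∧
    HasDerivAt (fun s' => d.wt t s' y) (d.wtS t s y) s ∧
    HasDerivAt (fun y' => d.wt t s y') (d.wtY t s y) y ∧
    HasDerivAt (fun s' => d.wtS t s' y) (d.wtSS t s y) s ∧
    HasDerivAt (fun y' => d.wtS t s y') (d.wtSY t s y) y ∧
    HasDerivAt (fun y' => d.wtY t s y') (d.wtYY t s y) y
  wh_deriv : ∀ t ∈ Ioo (0:ℝ) d.T, ∀ s ∈ Ioo d.K⁻¹ d.K, ∀ y ∈ Ioo d.yl d.yu,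
    HasDerivAt (fun t' => d.wh t' s y) (d.whT t s y) t ∧
    HasDerivAt (fun s' => d.wh t s' y) (d.whS t s y) s ∧
    HasDerivAt (fun y' => d.wh t s y') (d.whY t s y) y ∧
    HasDerivAt (fun s' => d.whS t s' y) (d.whSS t s y) s ∧
    HasDerivAt (fun y' => d.whS t s y') (d.whSY t s y) y ∧
    HasDerivAt (fun y' => d.whY t s y') (d.whYY t s y) y
  wt_deriv_cont : ∀ g ∈ [d.wtT, d.wtS, d.wtY, d.wtSS, d.wtSY, d.wtYY],
    ContinuousOn (fun p : ℝ × ℝ × ℝ => g p.1 p.2.1 p.2.2)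
      (Ioo 0 d.T ×ˢ Ioo d.K⁻¹ d.K ×ˢ Ioo d.yl d.yu)
  wh_deriv_cont : ∀ g ∈ [d.whT, d.whS, d.whY, d.whSS, d.whSY, d.whYY],
    ContinuousOn (fun p : ℝ × ℝ × ℝ => g p.1 p.2.1 p.2.2)
      (Ioo 0 d.T ×ˢ Ioo d.K⁻¹ d.K ×ˢ Ioo d.yl d.yu)
  wt_bdd : ∀ g ∈ [d.wtT, d.wtS, d.wtY, d.wtSS, d.wtSY, d.wtYY],
    ∀ t ∈ Ioo (0:ℝ) d.T, ∀ s ∈ Ioo d.K⁻¹ d.K, ∀ y ∈ Ioo d.yl d.yu, |g t s y| ≤ d.K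
  wh_bdd : ∀ g ∈ [d.whT, d.whS, d.whY, d.whSS, d.whSY, d.whYY],
    ∀ t ∈ Ioo (0:ℝ) d.T, ∀ s ∈ Ioo d.K⁻¹ d.K, ∀ y ∈ Ioo d.yl d.yu, |g t s y| ≤ d.K

lemma hv_mvt (g g' : ℝ → ℝ) (hg : ∀ x, HasDerivAt g (g' x) x) (x z : ℝ) :
    ∃ ξ ∈ uIcc x z, g z - g x = g' ξ * (z - x) := by
  rcases lt_trichotomy x z with h | h | h
  · obtain ⟨c, hc, h2⟩ := exists_hasDerivAt_eq_slope g g' h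
      (fun w _ => (hg w).continuousAt.continuousWithinAt) (fun w _ => hg w)
    refine ⟨c, ?_, ?_⟩
    · rw [uIcc_of_le h.le]; exact ⟨hc.1.le, hc.2.le⟩
    · rw [h2, div_mul_cancel₀ _ (by linarith)]
  · subst h; exact ⟨x, by simp, by simp⟩
  · obtain ⟨c, hc, h2⟩ := exists_hasDerivAt_eq_slope g g' h
      (fun w _ => (hg w).continuousAt.continuousWithinAt) (fun w _ => hg w)
    refine ⟨c, ?_, ?_⟩
    · rw [uIcc_of_ge h.le]; exact ⟨hc.1.le, hc.2.le⟩
    · have : x - z ≠ 0 := by linarith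
      rw [h2]; field_simp; ring

lemma hv_core (K eps M : ℝ) (hK : 1 < K) (heps : 0 < eps) (hM : 0 ≤ M) :
    ∃ C > (0:ℝ), ∃ ψ₁ > (0:ℝ), ψ₁ ≤ 1 ∧ ∀ (f f1 f2 f3 : ℝ → ℝ) (sb A R ψ : ℝ),
      (∀ x, HasDerivAt f (f1 x) x) → (∀ x, HasDerivAt f1 (f2 x) x) →
      (∀ x, HasDerivAt f2 (f3 x) x) →
      (∀ x ∈ Icc 0 K, 1 / K ≤ f2 x) → (∀ x ∈ Icc 0 K, |f3 x| ≤ K) →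
      eps ≤ sb → sb ≤ K - eps → f1 sb = 0 → |A| ≤ K → |R| ≤ M → 0 < ψ → ψ < ψ₁ →
      ∃ x ∈ Ioo 0 K, f1 x = ψ * (A + ψ * R) * x ∧
        (∀ z ∈ Icc 0 K, f x - ψ * (A + ψ * R) * (x ^ 2 / 2) ≤
          f z - ψ * (A + ψ * R) * (z ^ 2 / 2)) ∧
        |x - (sb + sb * A / f2 sb * ψ)| ≤ C * ψ ^ 2 := by
  have hK0 : 0 < K := by linarith
  obtain ⟨N, hN⟩ : ∃ N, N = K + M := ⟨_, rfl⟩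
  have hN0 : 0 < N := by linarith
  refine ⟨K * (K * (2 * K ^ 2 * N) ^ 2 + 2 * K ^ 2 * N * K + K * M), by positivity,
    min 1 (min (1 / (2 * K * N)) (eps / (2 * K ^ 2 * N))), by positivity, min_le_left _ _, ?_⟩
  intro f f1 f2 f3 sb A R ψ hf hf1 hf2 hb2 hb3 hsl hsu hfs hA hR hψ hψ1
  have h1 : ψ < 1 := hψ1.trans_le (min_le_left _ _)
  have h2 : ψ < 1 / (2 * K * N) :=
    hψ1.trans_le ((min_le_right _ _).trans (min_le_left _ _))
  have h3 : ψ < eps / (2 * K ^ 2 * N) :=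
    hψ1.trans_le ((min_le_right _ _).trans (min_le_right _ _))
  rw [lt_div_iff₀ (by positivity)] at h2 h3
  obtain ⟨P, hP⟩ : ∃ P, P = A + ψ * R := ⟨_, rfl⟩
  rw [← hP]
  have hPN : |P| ≤ N := by
    rw [hP, hN]
    refine (abs_add_le _ _).trans (add_le_add hA ?_)
    rw [abs_mul, abs_of_pos hψ]
    nlinarith [abs_nonneg R]
  have hψP : |ψ * P| ≤ ψ * N := by
    rw [abs_mul, abs_of_pos hψ]; gcongr
  have hsb : sb ∈ Icc 0 K := ⟨by linarith, by linarith⟩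
  have hψN : ψ * N ≤ 1 / (2 * K) := by
    rw [le_div_iff₀ (by positivity)]; linarith
  have hKK : 1 / K = 1 / (2 * K) + 1 / (2 * K) := by field_simp; norm_num
  have hc0 : 0 < 1 / (2 * K) := by positivity
  have hG : ∀ x, HasDerivAt (fun x => f1 x - ψ * P * x) (f2 x - ψ * P) x := fun x => by
    exact ((hf1 x).sub ((hasDerivAt_id x).const_mul (ψ * P))).congr_deriv (by simp)
  have hF : ∀ x, HasDerivAt (fun x => f x - ψ * P * (x ^ 2 / 2)) (f1 x - ψ * P * x) x :=
    fun x => by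
      have := (hf x).sub ((((hasDerivAt_id x).pow 2).div_const 2).const_mul (ψ * P))
      exact this.congr_deriv (by simp)
  have hslope : ∀ x ∈ Icc 0 K, ∀ z ∈ Icc 0 K, ∃ k, 1 / (2 * K) ≤ k ∧
      (f1 z - ψ * P * z) - (f1 x - ψ * P * x) = k * (z - x) := by
    intro x hx z hz
    obtain ⟨ξ, hξ, h⟩ := hv_mvt _ _ hG x z
    refine ⟨_, ?_, h⟩
    have := hb2 ξ (uIcc_subset_Icc hx hz hξ)
    have := (abs_le.1 hψP).2
    linarith
  have hGs : |ψ * P * sb| ≤ ψ * N * K := by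
    rw [abs_mul, abs_of_nonneg hsb.1]
    exact mul_le_mul hψP hsb.2 hsb.1 (by positivity)
  have hGs' : ψ * N * K < 1 / (2 * K) * eps := by
    rw [div_mul_eq_mul_div, lt_div_iff₀ (by positivity)]; nlinarith
  have hG0 : f1 0 - ψ * P * 0 < 0 := by
    obtain ⟨k, hk, h⟩ := hslope 0 ⟨le_rfl, hK0.le⟩ sb hsb
    have : 1 / (2 * K) * eps ≤ k * (sb - 0) :=
      mul_le_mul hk (by linarith) heps.le (by linarith)
    have := (abs_le.1 hGs).1
    rw [hfs] at h
    linarith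
  have hGK : 0 < f1 K - ψ * P * K := by
    obtain ⟨k, hk, h⟩ := hslope sb hsb K ⟨hK0.le, le_rfl⟩
    have : 1 / (2 * K) * eps ≤ k * (K - sb) :=
      mul_le_mul hk (by linarith) heps.le (by linarith)
    have := (abs_le.1 hGs).2
    rw [hfs] at h
    linarith
  obtain ⟨x, hx, hx0⟩ := intermediate_value_Ioo (f := fun x => f1 x - ψ * P * x) hK0.le
    (fun w _ => (hG w).continuousAt.continuousWithinAt) ⟨hG0, hGK⟩
  have hx0 : f1 x - ψ * P * x = 0 := hx0
  have hxI : x ∈ Icc 0 K := ⟨hx.1.le, hx.2.le⟩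
  have hδ : |x - sb| ≤ 2 * K ^ 2 * N * ψ := by
    obtain ⟨k, hk, h⟩ := hslope sb hsb x hxI
    have e : k * (x - sb) = ψ * P * sb := by rw [← h, hx0, hfs]; ring
    have e2 : k * |x - sb| = |ψ * P * sb| := by
      rw [← e, abs_mul k, abs_of_pos (hc0.trans_le hk)]
    have : 1 / (2 * K) * |x - sb| ≤ ψ * N * K :=
      (mul_le_mul_of_nonneg_right hk (abs_nonneg _)).trans (e2.le.trans hGs)
    rw [div_mul_eq_mul_div, div_le_iff₀ (by positivity)] at this
    linarith
  refine ⟨x, hx, by linarith, ?_, ?_⟩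
  · intro z hz
    obtain ⟨ξ, hξ, h⟩ := hv_mvt _ _ hF x z
    obtain ⟨k, hk, h'⟩ := hslope x hxI ξ (uIcc_subset_Icc hxI hz hξ)
    have e : f1 ξ - ψ * P * ξ = k * (ξ - x) := by linarith
    have hk0 : 0 < k := hc0.trans_le hk
    have : 0 ≤ (ξ - x) * (z - x) := by
      rcases mem_uIcc.1 hξ with ⟨a, b⟩ | ⟨a, b⟩
      · exact mul_nonneg (by linarith) (by linarith)
      · exact mul_nonneg_of_nonpos_of_nonpos (by linarith) (by linarith)
    have : 0 ≤ k * ((ξ - x) * (z - x)) := by positivity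
    rw [e] at h
    linarith
  · obtain ⟨ξ, hξ, h⟩ := hv_mvt _ _ hf1 sb x
    have hξI := uIcc_subset_Icc hsb hxI hξ
    obtain ⟨η, hη, h'⟩ := hv_mvt _ _ hf2 sb ξ
    have hηI := uIcc_subset_Icc hsb hξI hη
    have hξδ : |ξ - sb| ≤ |x - sb| := abs_sub_left_of_mem_uIcc hξ
    have hq := hb2 sb hsb
    have hq0 : 0 < f2 sb := lt_of_lt_of_le (by positivity) hq
    have key : f2 sb * (x - (sb + sb * A / f2 sb * ψ)) =
        -(f3 η * (ξ - sb) * (x - sb)) + (ψ * (x - sb) * A + ψ ^ 2 * (x * R)) := by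
      have e1 : f2 sb * (x - (sb + sb * A / f2 sb * ψ)) = f2 sb * (x - sb) - sb * A * ψ := by
        field_simp
        ring
      have e2 : f1 x = f2 ξ * (x - sb) := by linarith
      have e3 : f1 x = ψ * P * x := by linarith
      rw [hP] at e3
      rw [e1, ← h']
      linear_combination e3 - e2
    obtain ⟨E, hE⟩ : ∃ E, E = x - (sb + sb * A / f2 sb * ψ) := ⟨_, rfl⟩
    rw [← hE] at key ⊢
    have b1 : |f3 η * (ξ - sb) * (x - sb)| ≤ K * (2 * K ^ 2 * N * ψ) * (2 * K ^ 2 * N * ψ) := by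
      rw [abs_mul, abs_mul]
      have := hb3 η hηI
      have := hξδ.trans hδ
      gcongr
    have b2 : |ψ * (x - sb) * A| ≤ ψ * (2 * K ^ 2 * N * ψ) * K := by
      rw [abs_mul, abs_mul, abs_of_pos hψ]; gcongr
    have b3 : |ψ ^ 2 * (x * R)| ≤ ψ ^ 2 * (K * M) := by
      rw [abs_mul, abs_mul, abs_of_pos (pow_pos hψ 2), abs_of_pos hx.1]
      have := hx.2.le
      gcongr
    have b4 : |f2 sb * E| ≤ (K * (2 * K ^ 2 * N) ^ 2 + 2 * K ^ 2 * N * K + K * M) * ψ ^ 2 := by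
      rw [key]
      refine (abs_add_le _ _).trans ?_
      rw [abs_neg]
      have := abs_add_le (ψ * (x - sb) * A) (ψ ^ 2 * (x * R))
      linarith
    rw [abs_mul, abs_of_pos hq0] at b4
    have b5 : 1 / K * |E| ≤ f2 sb * |E| := mul_le_mul_of_nonneg_right hq (abs_nonneg _)
    have b6 := b5.trans b4
    rw [div_mul_eq_mul_div, div_le_iff₀ hK0] at b6
    linarith

lemma hv_add {a b p q : ℝ} (h : |a| ≤ p) (h' : |b| ≤ q) : |a + b| ≤ p + q :=
  (abs_add_le _ _).trans (add_le_add h h')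

lemma hv_mul {a b p q : ℝ} (h : |a| ≤ p) (h' : |b| ≤ q) : |a * b| ≤ p * q := by
  rw [abs_mul]; exact mul_le_mul h h' (abs_nonneg _) ((abs_nonneg _).trans h)

lemma hv_neg {a p : ℝ} (h : |a| ≤ p) : |-a| ≤ p := by rwa [abs_neg]

lemma hv_two : |(2:ℝ)| ≤ 2 := by norm_num

/-- The remainder term. -/
def hvR (A s ϑ ψ i u1 u2 u3 w ws wy wss wsy wyy h hs hy hss hsy hyy : ℝ) : ℝ :=
  (A * (-(u2 * w + u1 * wy) + (u2 * h + u1 * hy) * ψ)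
    + -(s * s * ((-(u1 * wss) + u1 * hss * ψ)
      + 2 * ϑ * (-(u2 * ws + u1 * wsy) * ψ + (u2 * hs + u1 * hsy) * (ψ * ψ))
      + ϑ * ϑ * ψ * (u2 + -(u3 * w + 2 * u2 * wy + u1 * wyy) * ψ
        + (u3 * h + 2 * u2 * hy + u1 * hyy) * (ψ * ψ))))) * i

lemma hv_R (m : ℝ) : ∃ M, 0 ≤ M ∧
    ∀ A s ϑ ψ i u1 u2 u3 w ws wy wss wsy wyy h hs hy hss hsy hyy : ℝ,
    |A| ≤ m → |s| ≤ m → |ϑ| ≤ m → |ψ| ≤ m → |i| ≤ m → |u1| ≤ m → |u2| ≤ m → |u3| ≤ m →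
    |w| ≤ m → |ws| ≤ m → |wy| ≤ m → |wss| ≤ m → |wsy| ≤ m → |wyy| ≤ m →
    |h| ≤ m → |hs| ≤ m → |hy| ≤ m → |hss| ≤ m → |hsy| ≤ m → |hyy| ≤ m →
    |hvR A s ϑ ψ i u1 u2 u3 w ws wy wss wsy wyy h hs hy hss hsy hyy| ≤ M := by
  refine ⟨|(m * ((m * m + m * m) + (m * m + m * m) * m)
    + (m * m * ((m * m + m * m * m)
      + 2 * m * ((m * m + m * m) * m + (m * m + m * m) * (m * m))
      + m * m * m * (m + (m * m + 2 * m * m + m * m) * m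
        + (m * m + 2 * m * m + m * m) * (m * m))))) * m|, abs_nonneg _, ?_⟩
  intros
  refine le_trans ?_ (le_abs_self _)
  unfold hvR
  repeat first | assumption | exact hv_two | apply hv_add | apply hv_mul | apply hv_neg

lemma hv_bdd (g : ℝ → ℝ) (hg : Continuous g) (a b : ℝ) :
    ∃ m, ∀ y ∈ Ioo a b, |g y| ≤ m := by
  obtain ⟨m, hm⟩ := (isCompact_Icc (a := a) (b := b)).exists_bound_of_continuousOn hg.continuousOn
  exact ⟨m, fun y hy => hm y ⟨hy.1.le, hy.2.le⟩⟩

lemma hv_bdd3 (g : ℝ × ℝ × ℝ → ℝ) (a b c e p q : ℝ)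
    (hg : ContinuousOn g (Icc a b ×ˢ Icc c e ×ˢ Icc p q)) :
    ∃ m, ∀ t ∈ Ioo a b, ∀ s ∈ Ioo c e, ∀ y ∈ Ioo p q, |g (t, s, y)| ≤ m := by
  obtain ⟨m, hm⟩ := (isCompact_Icc.prod (isCompact_Icc.prod isCompact_Icc)).exists_bound_of_continuousOn hg
  exact ⟨m, fun t ht s hs y hy => hm (t, s, y)
    ⟨Ioo_subset_Icc_self ht, Ioo_subset_Icc_self hs, Ioo_subset_Icc_self hy⟩⟩

/-- **Existence and characterisation of the worst-case volatility.**
For every `L > 0` there are `C₁ > 0` and `ψ₁ > 0` such that for every `(t,s,y) ∈ D`,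
every `ϑ̃ ∈ [-L,L]` and every `ψ ∈ (0,ψ₁)`, the function
`ς ↦ H^ψ(t,s,y; V̄_s(t,s) + ϑ̃ψ, ς)` attains its minimum over `[0,K]` at a point
`ς* ∈ (0,K)` satisfying the first-order condition and `|ς* - σ^ψ(t,s,y)| ≤ C₁ ψ²`. -/
theorem optimal_volatility (d : HedgeData) (hd : d.Assumptions) (L : ℝ) (hL : 0 < L) :
    ∃ C₁ > (0:ℝ), ∃ ψ₁ > (0:ℝ),
      ∀ t ∈ Ioo (0:ℝ) d.T, ∀ s ∈ Ioo d.K⁻¹ d.K, ∀ y ∈ Ioo d.yl d.yu,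
        ∀ ϑ ∈ Icc (-L) L, ∀ ψ ∈ Ioo (0:ℝ) ψ₁,
          ∃ ςs ∈ Ioo (0:ℝ) d.K,
            IsMinOn (fun ς => d.Ham ψ t s y (d.Vs t s + ϑ * ψ) ς) (Icc (0:ℝ) d.K) ςs ∧
            HasDerivAt (fun ς => d.Ham ψ t s y (d.Vs t s + ϑ * ψ) ς) 0 ςs ∧
            |ςs - d.sigmaPsi ψ t s y| ≤ C₁ * ψ ^ 2 := by
  have hK0 : 0 < d.K := by linarith [hd.hK]
  have cU1 : Continuous d.U1 := continuous_iff_continuousAt.2 fun y => (hd.U_deriv2 y).continuousAt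
  have cU2 : Continuous d.U2 := continuous_iff_continuousAt.2 fun y => (hd.U_deriv3 y).continuousAt
  obtain ⟨m1, hm1⟩ := hv_bdd _ cU1 d.yl d.yu
  obtain ⟨m2, hm2⟩ := hv_bdd _ cU2 d.yl d.yu
  obtain ⟨m3, hm3⟩ := hv_bdd _ hd.U3_cont d.yl d.yu
  obtain ⟨m4, hm4⟩ := hv_bdd _ (cU1.inv₀ fun y => (hd.U1_pos y).ne') d.yl d.yu
  obtain ⟨m5, hm5⟩ := hv_bdd3 _ _ _ _ _ _ _ hd.wt_cont
  obtain ⟨m6, hm6⟩ := hv_bdd3 _ _ _ _ _ _ _ hd.wh_cont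
  obtain ⟨m, hm⟩ : ∃ m, m = |m1| + |m2| + |m3| + |m4| + |m5| + |m6| + d.K + L + 1 := ⟨_, rfl⟩
  have n1 := abs_nonneg m1
  have n2 := abs_nonneg m2
  have n3 := abs_nonneg m3
  have n4 := abs_nonneg m4
  have n5 := abs_nonneg m5
  have n6 := abs_nonneg m6
  obtain ⟨M, hM, hMR⟩ := hv_R m
  obtain ⟨C, hC, ψ₁, hψ₁, hψ₁1, hcore⟩ := hv_core d.K d.eps M hd.hK hd.heps hM
  refine ⟨C, hC, ψ₁, hψ₁, ?_⟩
  intro t ht s hs y hy ϑ hϑ ψ hψ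
  have hKm : d.K ≤ m := by linarith
  have ht' := Ioo_subset_Icc_self ht
  have bt : ∀ g ∈ [d.wtT, d.wtS, d.wtY, d.wtSS, d.wtSY, d.wtYY], |g t s y| ≤ m :=
    fun g hg => (hd.wt_bdd g hg t ht s hs y hy).trans hKm
  have bh : ∀ g ∈ [d.whT, d.whS, d.whY, d.whSS, d.whSY, d.whYY], |g t s y| ≤ m :=
    fun g hg => (hd.wh_bdd g hg t ht s hs y hy).trans hKm
  have hs0 : 0 < s := lt_trans (inv_pos.2 hK0) hs.1
  have hR := hMR (s ^ 2 * d.Vss t s) s ϑ ψ (d.U1 y)⁻¹ (d.U1 y) (d.U2 y) (d.U3 y)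
    (d.wt t s y) (d.wtS t s y) (d.wtY t s y) (d.wtSS t s y) (d.wtSY t s y) (d.wtYY t s y)
    (d.wh t s y) (d.whS t s y) (d.whY t s y) (d.whSS t s y) (d.whSY t s y) (d.whYY t s y)
    ((hd.Vss_bdd t ht s hs).trans hKm)
    (by rw [abs_of_pos hs0]; linarith [hs.2])
    ((abs_le.2 hϑ).trans (by linarith))
    (by rw [abs_of_pos hψ.1]; linarith [hψ.2])
    ((hm4 y hy).trans (by linarith [le_abs_self m4]))
    ((hm1 y hy).trans (by linarith [le_abs_self m1]))
    ((hm2 y hy).trans (by linarith [le_abs_self m2]))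
    ((hm3 y hy).trans (by linarith [le_abs_self m3]))
    ((hm5 t ht s hs y hy).trans (by linarith [le_abs_self m5]))
    (bt _ (by simp)) (bt _ (by simp)) (bt _ (by simp)) (bt _ (by simp)) (bt _ (by simp))
    ((hm6 t ht s hs y hy).trans (by linarith [le_abs_self m6]))
    (bh _ (by simp)) (bh _ (by simp)) (bh _ (by simp)) (bh _ (by simp)) (bh _ (by simp))
  obtain ⟨R, hRdef⟩ : ∃ R, R = hvR (s ^ 2 * d.Vss t s) s ϑ ψ (d.U1 y)⁻¹ (d.U1 y) (d.U2 y) (d.U3 y)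
    (d.wt t s y) (d.wtS t s y) (d.wtY t s y) (d.wtSS t s y) (d.wtSY t s y) (d.wtYY t s y)
    (d.wh t s y) (d.whS t s y) (d.whY t s y) (d.whSS t s y) (d.whSY t s y) (d.whYY t s y) :=
    ⟨_, rfl⟩
  rw [← hRdef] at hR
  obtain ⟨x, hx, hx1, hxmin, hxest⟩ := hcore (d.f t s y) (d.f1 t s y) (d.f2 t s y) (d.f3 t s y)
    (d.sb t s) (s ^ 2 * d.Vss t s) R ψ (hd.f_deriv1 t s y) (hd.f_deriv2 t s y)
    (hd.f_deriv3 t s y) (fun z hz => (hd.f2_bdd t ht s hs y hy z hz).1)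
    (fun z hz => (hd.f34_bdd t ht s hs y hy z hz).1) (hd.sb_lb t ht' s hs) (hd.sb_ub t ht' s hs)
    (hd.f_min t ht s hs y hy).2 (hd.Vss_bdd t ht s hs) hR hψ.1 hψ.2
  have ha := hd.U1_pos y
  have hψ0 := hψ.1
  have hham : (fun ς => d.Ham ψ t s y (d.Vs t s + ϑ * ψ) ς) = fun ς =>
      d.U1 y / ψ * (d.f t s y ς - ψ * (s ^ 2 * d.Vss t s + ψ * R) * (ς ^ 2 / 2))
        + 1 / 2 * s ^ 2 * d.Vss t s * (d.sb t s) ^ 2 * d.wPsiY ψ t s y := by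
    have e : d.U1 y * R = hvR (s ^ 2 * d.Vss t s) s ϑ ψ 1 (d.U1 y) (d.U2 y) (d.U3 y)
        (d.wt t s y) (d.wtS t s y) (d.wtY t s y) (d.wtSS t s y) (d.wtSY t s y) (d.wtYY t s y)
        (d.wh t s y) (d.whS t s y) (d.whY t s y) (d.whSS t s y) (d.whSY t s y)
        (d.whYY t s y) := by
      rw [hRdef]; unfold hvR; rw [mul_comm, mul_assoc, inv_mul_cancel₀ ha.ne']
    funext ς
    have e2 : d.U1 y / ψ * (d.f t s y ς - ψ * (s ^ 2 * d.Vss t s + ψ * R) * (ς ^ 2 / 2)) =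
        1 / ψ * d.U1 y * d.f t s y ς
          - (d.U1 y * (s ^ 2 * d.Vss t s) + ψ * (d.U1 y * R)) * (ς ^ 2 / 2) := by
      field_simp
    rw [e2, e]
    unfold HedgeData.Ham hvR HedgeData.wPsiY HedgeData.wPsiSS HedgeData.wPsiSY HedgeData.wPsiYY
    ring
  refine ⟨x, hx, ?_, ?_, ?_⟩
  · rw [hham]
    intro z hz
    have := hxmin z hz
    have h0 : 0 ≤ d.U1 y / ψ := by positivity
    have := mul_le_mul_of_nonneg_left this h0
    simp only [mem_ofPred_eq]
    linarith
  · rw [hham]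
    have := ((((hd.f_deriv1 t s y x).sub ((((hasDerivAt_id x).pow 2).div_const 2).const_mul
      (ψ * (s ^ 2 * d.Vss t s + ψ * R)))).const_mul (d.U1 y / ψ)).add_const
      (1 / 2 * s ^ 2 * d.Vss t s * (d.sb t s) ^ 2 * d.wPsiY ψ t s y))
    exact this.congr_deriv (by rw [hx1]; simp)
  · have e : d.sigmaPsi ψ t s y = d.sb t s + d.sb t s * (s ^ 2 * d.Vss t s)
        / d.f2 t s y (d.sb t s) * ψ := by
      unfold HedgeData.sigmaPsi HedgeData.sigmaTilde; ring
    rw [e]; exact hxest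
end

section
/- Linear-order localisation of minimisers of the Hamiltonian in the volatility variable: for every L > 0 there exist constants C > 0 and ψ₁ > 0 such that for every (t,s,y) ∈ D, every ϑ̃ ∈ [−L,L], and every ψ ∈ (0,ψ₁), every minimiser ς* over [0,K] of the function ς ↦ H^ψ(t,s,y; V̄_s(t,s) + ϑ̃ψ, ς) satisfies |σ̄(t,s) − ς*| ≤ C ψ. -/
open Set

lemma quad_lower (f f1 f2 : ℝ → ℝ) (h1 : ∀ x, HasDerivAt f (f1 x) x)
    (h2 : ∀ x, HasDerivAt f1 (f2 x) x) (c K a x : ℝ) (ha : a ∈ Icc 0 K) (hx : x ∈ Icc 0 K)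
    (hf2 : ∀ z ∈ Icc 0 K, c ≤ f2 z) (hfa : f a = 0) (hf1a : f1 a = 0) :
    c / 2 * (x - a) ^ 2 ≤ f x := by
  have g1 : ∀ z, HasDerivAt (fun z => f z - c / 2 * (z - a) ^ 2) (f1 z - c * (z - a)) z := by
    intro z
    have := (h1 z).sub (((((hasDerivAt_id z).sub_const a).pow 2).const_mul (c / 2)))
    refine HasDerivAt.congr_deriv this ?_
    simp only [id]
    push_cast
    ring
  have g2 : ∀ z, HasDerivAt (fun z => f1 z - c * (z - a)) (f2 z - c) z := by
    intro z
    have := (h2 z).sub (((hasDerivAt_id z).sub_const a).const_mul c)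
    refine HasDerivAt.congr_deriv this ?_
    ring
  rcases lt_trichotomy a x with h | h | h
  · obtain ⟨p, hp, hpe⟩ := exists_hasDerivAt_eq_slope _ _ h
      (fun z _ => (g1 z).continuousAt.continuousWithinAt) (fun z _ => g1 z)
    obtain ⟨q, hq, hqe⟩ := exists_hasDerivAt_eq_slope _ _ hp.1
      (fun z _ => (g2 z).continuousAt.continuousWithinAt) (fun z _ => g2 z)
    have hq2 := hf2 q ⟨by linarith [ha.1, hq.1], by linarith [hx.2, hq.2, hp.2]⟩
    rw [eq_div_iff (by linarith [hp.1])] at hqe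
    rw [eq_div_iff (by linarith)] at hpe
    simp only [hfa, hf1a] at hpe hqe
    have e1 : 0 ≤ f1 p - c * (p - a) := by
      have := mul_nonneg (sub_nonneg.2 hq2) (sub_nonneg.2 hp.1.le)
      linarith
    have := mul_nonneg e1 (sub_nonneg.2 h.le)
    linarith
  · subst h; simp [hfa]
  · obtain ⟨p, hp, hpe⟩ := exists_hasDerivAt_eq_slope _ _ h
      (fun z _ => (g1 z).continuousAt.continuousWithinAt) (fun z _ => g1 z)
    obtain ⟨q, hq, hqe⟩ := exists_hasDerivAt_eq_slope _ _ hp.2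
      (fun z _ => (g2 z).continuousAt.continuousWithinAt) (fun z _ => g2 z)
    have hq2 := hf2 q ⟨by linarith [hx.1, hq.1, hp.1], by linarith [ha.2, hq.2]⟩
    rw [eq_div_iff (by linarith [hp.2])] at hqe
    rw [eq_div_iff (by linarith)] at hpe
    simp only [hfa, hf1a] at hpe hqe
    have e1 : f1 p - c * (p - a) ≤ 0 := by
      have := mul_nonneg (sub_nonneg.2 hq2) (sub_nonneg.2 hp.2.le)
      linarith
    have := mul_nonneg (sub_nonneg.2 e1) (sub_nonneg.2 h.le)
    linarith

lemma poly_bd {p q r P Q R ψ : ℝ} (hp : |p| ≤ P) (hq : |q| ≤ Q) (hr : |r| ≤ R)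
    (h0 : 0 ≤ ψ) (h1 : ψ ≤ 1) : |p - q * ψ + r * ψ ^ 2| ≤ P + Q + R := by
  have e1 : |q * ψ| ≤ Q := by
    rw [abs_mul, abs_of_nonneg h0]
    nlinarith [abs_nonneg q]
  have e2 : |r * ψ ^ 2| ≤ R := by
    rw [abs_mul, abs_of_nonneg (sq_nonneg ψ)]
    have : ψ ^ 2 ≤ 1 := by nlinarith
    nlinarith [abs_nonneg r]
  calc _ ≤ |p - q * ψ| + |r * ψ ^ 2| := abs_add_le _ _
    _ ≤ |p| + |q * ψ| + |r * ψ ^ 2| := by gcongr; exact abs_sub _ _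
    _ ≤ _ := by gcongr

lemma mul_bd {a b M N : ℝ} (ha : |a| ≤ M) (hb : |b| ≤ N) : |a * b| ≤ M * N := by
  rw [abs_mul]
  exact mul_le_mul ha hb (abs_nonneg _) ((abs_nonneg _).trans ha)

lemma sum_bd {a b M N : ℝ} (ha : |a| ≤ M) (hb : |b| ≤ N) : |a + b| ≤ M + N :=
  (abs_add_le _ _).trans (add_le_add ha hb)

lemma cont_bd {α : Type*} [TopologicalSpace α] {S : Set α} (hS : IsCompact S) {g : α → ℝ}
    (hg : ContinuousOn g S) : ∃ M, ∀ x ∈ S, |g x| ≤ M := by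
  obtain ⟨M, hM⟩ := hS.exists_bound_of_continuousOn hg
  exact ⟨M, hM⟩

/-- **Linear-order localisation of minimisers of the Hamiltonian in the volatility variable.**
For every `L > 0` there are `C > 0` and `ψ₁ > 0` such that for every `(t,s,y) ∈ D`,
every `ϑ̃ ∈ [-L,L]` and every `ψ ∈ (0,ψ₁)`, every minimiser `ς*` over `[0,K]` of
`ς ↦ H^ψ(t,s,y; V̄_s(t,s) + ϑ̃ψ, ς)` satisfies `|σ̄(t,s) - ς*| ≤ C ψ`. -/
theorem minimiser_localisation (d : HedgeData) (hd : d.Assumptions) (L : ℝ) (hL : 0 < L) :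
    ∃ C > (0:ℝ), ∃ ψ₁ > (0:ℝ),
      ∀ t ∈ Ioo (0:ℝ) d.T, ∀ s ∈ Ioo d.K⁻¹ d.K, ∀ y ∈ Ioo d.yl d.yu,
        ∀ ϑ ∈ Icc (-L) L, ∀ ψ ∈ Ioo (0:ℝ) ψ₁, ∀ ςs ∈ Icc (0:ℝ) d.K,
          IsMinOn (fun ς => d.Ham ψ t s y (d.Vs t s + ϑ * ψ) ς) (Icc (0:ℝ) d.K) ςs →
          |d.sb t s - ςs| ≤ C * ψ := by
  have hK := hd.hK
  have cU1 : Continuous d.U1 := continuous_iff_continuousAt.2 fun y => (hd.U_deriv2 y).continuousAt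
  have cU2 : Continuous d.U2 := continuous_iff_continuousAt.2 fun y => (hd.U_deriv3 y).continuousAt
  have hI : IsCompact (Icc d.yl d.yu) := isCompact_Icc
  have hJ : IsCompact (Icc 0 d.T ×ˢ Icc d.K⁻¹ d.K ×ˢ Icc d.yl d.yu) :=
    isCompact_Icc.prod (isCompact_Icc.prod isCompact_Icc)
  obtain ⟨M1, hM1⟩ := cont_bd hI cU1.continuousOn
  obtain ⟨M2, hM2⟩ := cont_bd hI cU2.continuousOn
  obtain ⟨M3, hM3⟩ := cont_bd hI hd.U3_cont.continuousOn
  obtain ⟨M4, hM4⟩ := cont_bd hJ hd.wt_cont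
  obtain ⟨M5, hM5⟩ := cont_bd hJ hd.wh_cont
  obtain ⟨y0, _, hy0⟩ := hI.exists_isMinOn ⟨d.yl, left_mem_Icc.2 hd.hy.le⟩ cU1.continuousOn
  obtain ⟨m, hm⟩ : ∃ m, m = d.U1 y0 := ⟨_, rfl⟩
  have hmpos : 0 < m := hm ▸ hd.U1_pos y0
  obtain ⟨M, hMK, hMM1, hMM2, hMM3, hMM4, hMM5⟩ : ∃ M, d.K ≤ M ∧ M1 ≤ M ∧ M2 ≤ M ∧ M3 ≤ M ∧
      M4 ≤ M ∧ M5 ≤ M :=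
    ⟨max d.K (max M1 (max M2 (max M3 (max M4 M5)))), by simp⟩
  have hMpos : 0 < M := by linarith
  obtain ⟨N, hN⟩ : ∃ N, N = M * (M + (M * M + M * M) + (M * M + M * M)) +
      M ^ 2 * ((0 + M * M + M * M) + 2 * L * (0 + (M * M + M * M) + (M * M + M * M)) +
      L ^ 2 * (M + (M * M + 2 * M * M + M * M) + (M * M + 2 * M * M + M * M))) := ⟨_, rfl⟩
  have hNpos : 0 < N := by rw [hN]; positivity
  refine ⟨2 * M ^ 2 * N / m, by positivity, 1, one_pos, ?_⟩
  intro t ht s hs y hy ϑ hϑ ψ hψ x hx hmin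
  have hy' := Ioo_subset_Icc_self hy
  have hs' := Ioo_subset_Icc_self hs
  have ht' := Ioo_subset_Icc_self ht
  have hψ0 := hψ.1
  have hψ1 := hψ.2.le
  have bU1 := (hM1 y hy').trans hMM1
  have bU2 := (hM2 y hy').trans hMM2
  have bU3 := (hM3 y hy').trans hMM3
  have bwt : |d.wt t s y| ≤ M := (hM4 (t, s, y) ⟨ht', hs', hy'⟩).trans hMM4
  have bwh : |d.wh t s y| ≤ M := (hM5 (t, s, y) ⟨ht', hs', hy'⟩).trans hMM5
  have Bt : ∀ g ∈ [d.wtT, d.wtS, d.wtY, d.wtSS, d.wtSY, d.wtYY], |g t s y| ≤ M :=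
    fun g hg => (hd.wt_bdd g hg t ht s hs y hy).trans hMK
  have Bh : ∀ g ∈ [d.whT, d.whS, d.whY, d.whSS, d.whSY, d.whYY], |g t s y| ≤ M :=
    fun g hg => (hd.wh_bdd g hg t ht s hs y hy).trans hMK
  have bA : |s ^ 2 * d.Vss t s| ≤ M := (hd.Vss_bdd t ht s hs).trans hMK
  have hmU : m ≤ d.U1 y := hm ▸ hy0 hy'
  have b2U2 : |2 * d.U2 y| ≤ 2 * M := mul_bd (by norm_num) bU2
  have bY : |d.wPsiY ψ t s y| ≤ M + (M * M + M * M) + (M * M + M * M) :=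
    poly_bd bU1 (sum_bd (mul_bd bU2 bwt) (mul_bd bU1 (Bt _ (by simp))))
      (sum_bd (mul_bd bU2 bwh) (mul_bd bU1 (Bh _ (by simp)))) hψ0.le hψ1
  have bYY : |d.wPsiYY ψ t s y| ≤
      M + (M * M + 2 * M * M + M * M) + (M * M + 2 * M * M + M * M) :=
    poly_bd bU2 (sum_bd (sum_bd (mul_bd bU3 bwt) (mul_bd b2U2 (Bt _ (by simp))))
        (mul_bd bU1 (Bt _ (by simp))))
      (sum_bd (sum_bd (mul_bd bU3 bwh) (mul_bd b2U2 (Bh _ (by simp))))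
        (mul_bd bU1 (Bh _ (by simp)))) hψ0.le hψ1
  have bSS : |d.wPsiSS ψ t s y| ≤ 0 + M * M + M * M := by
    have := poly_bd (p := 0) (P := 0) (by simp) (mul_bd bU1 (Bt d.wtSS (by simp)))
      (mul_bd bU1 (Bh d.whSS (by simp))) hψ0.le hψ1
    convert this using 2
    unfold HedgeData.wPsiSS
    ring
  have bSY : |d.wPsiSY ψ t s y| ≤ 0 + (M * M + M * M) + (M * M + M * M) := by
    have := poly_bd (p := 0) (P := 0) (by simp)
      (sum_bd (mul_bd bU2 (Bt d.wtS (by simp))) (mul_bd bU1 (Bt d.wtSY (by simp))))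
      (sum_bd (mul_bd bU2 (Bh d.whS (by simp))) (mul_bd bU1 (Bh d.whSY (by simp)))) hψ0.le hψ1
    convert this using 2
    unfold HedgeData.wPsiSY
    ring
  have bϑ : |ϑ * ψ| ≤ L := by
    have := mul_bd (abs_le.2 hϑ) (abs_le.2 ⟨by linarith, hψ1⟩ : |ψ| ≤ 1)
    simpa using this
  have bs : |s ^ 2| ≤ M ^ 2 := by
    have hs0 : 0 < s := lt_trans (by positivity) hs.1
    rw [abs_of_nonneg (sq_nonneg s)]
    exact pow_le_pow_left₀ hs0.le (hs.2.le.trans hMK) 2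
  have bϑ2 : |(ϑ * ψ) ^ 2| ≤ L ^ 2 := by
    rw [abs_pow]
    exact pow_le_pow_left₀ (abs_nonneg _) bϑ 2
  obtain ⟨B, hB⟩ : ∃ B, B = d.wPsiSS ψ t s y + 2 * (ϑ * ψ) * d.wPsiSY ψ t s y
        + (ϑ * ψ) ^ 2 * d.wPsiYY ψ t s y := ⟨_, rfl⟩
  have bB := sum_bd (sum_bd bSS (mul_bd (mul_bd (by norm_num : |(2:ℝ)| ≤ 2) bϑ) bSY))
    (mul_bd bϑ2 bYY)
  rw [← hB] at bB
  have bG : |s ^ 2 * d.Vss t s * d.wPsiY ψ t s y - s ^ 2 * B| ≤ N := by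
    rw [hN]
    exact (abs_sub _ _).trans (add_le_add (mul_bd bA bY) (mul_bd bs bB))
  have hsb := hd.sb_mem t ht' s hs'
  obtain ⟨hf0, hf10⟩ := hd.f_min t ht s hs y hy
  have hq := quad_lower _ _ _ (hd.f_deriv1 t s y) (hd.f_deriv2 t s y) (1 / d.K) d.K (d.sb t s) x
    hsb hx (fun z hz => (hd.f2_bdd t ht s hs y hy z hz).1) hf0 hf10
  have hle : d.Ham ψ t s y (d.Vs t s + ϑ * ψ) x ≤
      d.Ham ψ t s y (d.Vs t s + ϑ * ψ) (d.sb t s) := hmin hsb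
  simp only [HedgeData.Ham, add_sub_cancel_left, hf0, ← hB] at hle
  generalize d.sb t s = σ at *
  generalize d.f t s y x = F at *
  generalize d.U1 y = u at *
  obtain ⟨G, hG⟩ : ∃ G, G = s ^ 2 * d.Vss t s * d.wPsiY ψ t s y - s ^ 2 * B := ⟨_, rfl⟩
  rw [← hG] at bG
  have h1 : 1 / ψ * u * F ≤ 1 / 2 * ((x - σ) * (x + σ)) * G := by
    rw [hG]; linarith
  have h2 : 1 / 2 * ((x - σ) * (x + σ)) * G ≤ |σ - x| * (M * N) := by
    have e1 : |x + σ| ≤ 2 * M := abs_le.2 ⟨by linarith [hx.1, hsb.1], by linarith [hx.2, hsb.2]⟩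
    have e2 := mul_bd (mul_bd (le_refl |x - σ|) e1) bG
    have e3 := le_abs_self ((x - σ) * (x + σ) * G)
    rw [abs_sub_comm σ x]
    linarith
  have hK1 : 1 / M ≤ 1 / d.K := one_div_le_one_div_of_le (by linarith) hMK
  have h3 : 1 / M / 2 * (x - σ) ^ 2 ≤ F := le_trans (by gcongr) hq
  have h4 : 1 / ψ * m * (1 / M / 2 * (x - σ) ^ 2) ≤ |σ - x| * (M * N) := by
    refine le_trans ?_ (h1.trans h2)
    have : 0 ≤ 1 / M / 2 * (x - σ) ^ 2 := by positivity
    have hu : 0 ≤ u := by linarith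
    gcongr
  have h5 : (x - σ) ^ 2 = |σ - x| * |σ - x| := by rw [abs_mul_abs_self]; ring
  rw [h5] at h4
  rcases (abs_nonneg (σ - x)).eq_or_lt with h | h
  · rw [← h]; positivity
  · have h6 : 1 / ψ * m * (1 / M / 2) * |σ - x| ≤ M * N := by
      refine le_of_mul_le_mul_left ?_ h
      linarith
    have h7 : |σ - x| = (1 / ψ * m * (1 / M / 2) * |σ - x|) * (2 * M * ψ / m) := by
      field_simp
    rw [h7]
    calc _ ≤ M * N * (2 * M * ψ / m) := by gcongr
      _ = _ := by ring
end

section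
/- Smooth dependence of the worst-case volatility on the uncertainty-aversion parameter: for every L > 0 there exist ψ₁ > 0 and M > 0 such that for every (t,s,y) ∈ D and ϑ̃ ∈ [−L,L] there exists a three times continuously differentiable function ς* : (−ψ₁, ψ₁) → (0,K) with ς*(0) = σ̄(t,s), (dς*/dψ)(0) = σ̃(t,s,y), |d²ς*/dψ²| ≤ M on (−ψ₁,ψ₁), which satisfies for all ψ ∈ (−ψ₁,ψ₁) the equation U'(y) f'(t,s,y; ς*(ψ)) − s² V̄_ss(t,s) ς*(ψ) w^ψ_y(t,s,y) ψ + ς*(ψ) s² ( w^ψ_ss(t,s,y) + 2ϑ̃ψ w^ψ_sy(t,s,y) + ϑ̃²ψ² w^ψ_yy(t,s,y) ) ψ = 0, and such that for each ψ ∈ (0,ψ₁) the point ς*(ψ) is a minimiser over [0,K] of the function ς ↦ H^ψ(t,s,y; V̄_s(t,s) + ϑ̃ψ, ς). -/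
open Set

/-- Product of bounds. -/
lemma aux_mul {x y a b : ℝ} (hx : |x| ≤ a) (hy : |y| ≤ b) : |x * y| ≤ a * b := by
  rw [abs_mul]; exact mul_le_mul hx hy (abs_nonneg _) ((abs_nonneg _).trans hx)

lemma aux_add {x y a b : ℝ} (hx : |x| ≤ a) (hy : |y| ≤ b) : |x + y| ≤ a + b :=
  (abs_add_le _ _).trans (add_le_add hx hy)

lemma aux_sub {x y a b : ℝ} (hx : |x| ≤ a) (hy : |y| ≤ b) : |x - y| ≤ a + b :=
  (abs_sub _ _).trans (add_le_add hx hy)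

/-- Strong monotonicity. -/
lemma aux_strong {K : ℝ} {F1 F2 : ℝ → ℝ} (h2 : ∀ x, HasDerivAt F1 (F2 x) x)
    (hb : ∀ x ∈ Icc (0:ℝ) K, 1 / K ≤ F2 x) {x y : ℝ} (hx : 0 ≤ x) (hxy : x ≤ y) (hy : y ≤ K) :
    1 / K * (y - x) ≤ F1 y - F1 x := by
  refine Convex.mul_sub_le_image_sub_of_le_deriv (convex_Icc (0:ℝ) K)
    (fun z _ => (h2 z).continuousAt.continuousWithinAt)
    (fun z _ => (h2 z).differentiableAt.differentiableWithinAt) ?_ x ⟨hx, hxy.trans hy⟩ y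
    ⟨hx.trans hxy, hy⟩ hxy
  intro z hz
  rw [interior_Icc] at hz
  rw [(h2 z).deriv]
  exact hb z ⟨hz.1.le, hz.2.le⟩

/-- The root of `F1 ς = p ς` as a smooth function of `p`. -/
lemma aux_root (K eps : ℝ) (hK : 1 < K) (heps : 0 < eps) :
    ∃ p0 > (0:ℝ), p0 ≤ 1 / (2 * K) ∧ ∃ B > (0:ℝ), ∀ (σ : ℝ) (F1 F2 F3 F4 : ℝ → ℝ),
      eps ≤ σ → σ ≤ K - eps →
      (∀ x, HasDerivAt F1 (F2 x) x) → (∀ x, HasDerivAt F2 (F3 x) x) →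
      (∀ x, HasDerivAt F3 (F4 x) x) → Continuous F4 → F1 σ = 0 →
      (∀ x ∈ Icc (0:ℝ) K, 1 / K ≤ F2 x) → (∀ x ∈ Icc (0:ℝ) K, |F3 x| ≤ K) →
      ∃ q q1 q2 : ℝ → ℝ, q 0 = σ ∧ q1 0 = σ / F2 σ ∧ ContDiffOn ℝ 3 q (Ioo (-p0) p0) ∧
        ∀ p ∈ Ioo (-p0) p0, q p ∈ Ioo 0 K ∧ F1 (q p) = p * q p ∧ HasDerivAt q (q1 p) p ∧
          HasDerivAt q1 (q2 p) p ∧ |q1 p| ≤ B ∧ |q2 p| ≤ B := by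
  have hK0 : 0 < K := by linarith
  refine ⟨min (1 / (2 * K)) (eps / (4 * K ^ 2)), by positivity, min_le_left _ _,
    K * (2 * K) + (K * (2 * K) + K * (K * (K * (2 * K)) + 1) * (2 * K)) * (2 * K),
    by positivity, ?_⟩
  set p0 := min (1 / (2 * K)) (eps / (4 * K ^ 2)) with hp0
  have hp0pos : 0 < p0 := by positivity
  have hpa : p0 ≤ 1 / (2 * K) := min_le_left _ _
  have hpb : p0 * K < 1 / K * (eps / 2) := by
    have h : p0 ≤ eps / (4 * K ^ 2) := min_le_right _ _
    calc p0 * K ≤ eps / (4 * K ^ 2) * K := by gcongr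
      _ = 1 / K * (eps / 4) := by field_simp
      _ < _ := by gcongr; linarith
  intro σ F1 F2 F3 F4 hσ1 hσ2 h2 h3 h4 hc4 h0 hb2 hb3
  have hhalf : 1 / K = 1 / (2 * K) + 1 / (2 * K) := by field_simp; ring
  -- existence
  have hex : ∀ p, ∃ x, p ∈ Ioo (-p0) p0 → x ∈ Ioo 0 K ∧ F1 x = p * x := by
    intro p
    by_cases hp : p ∈ Ioo (-p0) p0
    · have hcont : ContinuousOn (fun x => F1 x - p * x) (Icc (σ - eps / 2) (σ + eps / 2)) :=
        fun x _ => ((h2 x).continuousAt.sub (by fun_prop)).continuousWithinAt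
      have hup := aux_strong h2 hb2 (x := σ) (y := σ + eps / 2) (by linarith) (by linarith)
        (by linarith)
      have hlo := aux_strong h2 hb2 (x := σ - eps / 2) (y := σ) (by linarith) (by linarith)
        (by linarith)
      have hpabs : |p| ≤ p0 := abs_le.2 ⟨hp.1.le, hp.2.le⟩
      have hpx : ∀ x, 0 ≤ x → x ≤ K → |p * x| ≤ p0 * K := fun x hx hx' =>
        aux_mul hpabs (by rwa [abs_of_nonneg hx])
      have e1 := abs_le.1 (hpx (σ + eps / 2) (by linarith) (by linarith))
      have e2 := abs_le.1 (hpx (σ - eps / 2) (by linarith) (by linarith))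
      have := intermediate_value_Icc (by linarith) hcont (show (0:ℝ) ∈ _ from by
        constructor
        · have : 1 / K * (σ - (σ - eps / 2)) = 1 / K * (eps / 2) := by ring
          show F1 (σ - eps / 2) - p * (σ - eps / 2) ≤ 0
          linarith [e2.1, e2.2]
        · have : 1 / K * (σ + eps / 2 - σ) = 1 / K * (eps / 2) := by ring
          show 0 ≤ F1 (σ + eps / 2) - p * (σ + eps / 2)
          linarith [e1.1, e1.2])
      obtain ⟨x, hx, hx0⟩ := this
      exact ⟨x, fun _ => ⟨⟨by linarith [hx.1], by linarith [hx.2]⟩, by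
        simp only at hx0; linarith⟩⟩
    · exact ⟨0, fun h => absurd h hp⟩
  choose q hq using hex
  -- Lipschitz
  have hstr : ∀ x y, x ∈ Icc 0 K → y ∈ Icc 0 K → 1 / K * |y - x| ≤ |F1 y - F1 x| := by
    intro x y hx hy
    rcases le_total x y with h | h
    · have := aux_strong h2 hb2 hx.1 h hy.2
      rw [abs_of_nonneg (sub_nonneg.2 h)]
      exact this.trans (le_abs_self _)
    · have := aux_strong h2 hb2 hy.1 h hx.2
      rw [abs_sub_comm y x, abs_sub_comm (F1 y), abs_of_nonneg (sub_nonneg.2 h)]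
      exact this.trans (le_abs_self _)
  have hlip : ∀ p ∈ Ioo (-p0) p0, ∀ p' x, x ∈ Ioo 0 K → F1 x = p' * x →
      |x - q p| ≤ 2 * K * K * |p' - p| := by
    intro p hp p' x hx hFx
    obtain ⟨hqp, hFq⟩ := hq p hp
    have h1 := hstr (q p) x ⟨hqp.1.le, hqp.2.le⟩ ⟨hx.1.le, hx.2.le⟩
    have h5 : F1 x - F1 (q p) = p * (x - q p) + (p' - p) * x := by rw [hFx, hFq]; ring
    rw [h5] at h1
    have hpabs : |p| ≤ 1 / (2 * K) := abs_le.2 ⟨by linarith [hp.1], by linarith [hp.2]⟩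
    have h6 : |p * (x - q p) + (p' - p) * x| ≤ 1 / (2 * K) * |x - q p| + |p' - p| * K :=
      aux_add (aux_mul hpabs le_rfl) (aux_mul le_rfl (by rw [abs_of_pos hx.1]; exact hx.2.le))
    have h7 : 1 / (2 * K) * |x - q p| ≤ |p' - p| * K := by
      have := h1.trans h6
      rw [hhalf, add_mul] at this
      linarith
    have h8 : |x - q p| = 2 * K * (1 / (2 * K) * |x - q p|) := by field_simp
    rw [h8]
    calc 2 * K * (1 / (2 * K) * |x - q p|) ≤ 2 * K * (|p' - p| * K) := by gcongr
      _ = _ := by ring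
  have hcq : ∀ p ∈ Ioo (-p0) p0, ContinuousAt q p := by
    intro p hp
    rw [ContinuousAt, tendsto_iff_norm_sub_tendsto_zero]
    have ht : Filter.Tendsto (fun p' => 2 * K * K * |p' - p|) (nhds p) (nhds 0) := by
      have : Continuous (fun p' => 2 * K * K * |p' - p|) := by fun_prop
      simpa using this.tendsto p
    refine squeeze_zero' (Filter.Eventually.of_forall fun _ => norm_nonneg _) ?_ ht
    filter_upwards [isOpen_Ioo.mem_nhds hp] with p' hp'
    exact hlip p hp p' (q p') (hq p' hp').1 (hq p' hp').2
  have hQ : ∀ p ∈ Ioo (-p0) p0, 1 / (2 * K) ≤ F2 (q p) - p := by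
    intro p hp
    have := hb2 (q p) ⟨(hq p hp).1.1.le, (hq p hp).1.2.le⟩
    linarith [hp.2]
  have hQpos : ∀ p ∈ Ioo (-p0) p0, 0 < F2 (q p) - p := fun p hp =>
    lt_of_lt_of_le (by positivity) (hQ p hp)
  have hdq : ∀ p ∈ Ioo (-p0) p0, HasDerivAt q (q p / (F2 (q p) - p)) p := by
    intro p hp
    obtain ⟨hqp, hFq⟩ := hq p hp
    have hne : q p ≠ 0 := hqp.1.ne'
    have hr : HasDerivAt (fun x => F1 x / x) ((F2 (q p) * q p - F1 (q p) * 1) / (q p) ^ 2) (q p) :=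
      (h2 (q p)).div (hasDerivAt_id _) hne
    have hQp := hQpos p hp
    have hval : (F2 (q p) * q p - F1 (q p) * 1) / (q p) ^ 2 = (F2 (q p) - p) / q p := by
      rw [hFq]; field_simp
    rw [hval] at hr
    have := HasDerivAt.of_local_left_inverse (hcq p hp) hr (by positivity) (by
      filter_upwards [isOpen_Ioo.mem_nhds hp] with p' hp'
      have := (hq p' hp').1.1.ne'
      rw [(hq p' hp').2]; field_simp)
    simpa [inv_div] using this
  have hq0 : q 0 = σ := by
    have h := hlip 0 ⟨by linarith, hp0pos⟩ 0 σ ⟨by linarith, by linarith⟩ (by rw [h0]; ring)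
    simp only [sub_self, abs_zero, mul_zero] at h
    have := abs_eq_zero.1 (le_antisymm h (abs_nonneg _))
    linarith
  -- smoothness
  have hF2c : ContDiff ℝ 2 F2 := by
    have hF3 : ContDiff ℝ 1 F3 := by
      rw [contDiff_one_iff_deriv]
      refine ⟨fun x => (h4 x).differentiableAt, ?_⟩
      rwa [show deriv F3 = F4 from funext fun x => (h4 x).deriv]
    rw [show (2 : WithTop ℕ∞) = 1 + 1 by norm_num, contDiff_succ_iff_deriv]
    refine ⟨fun x => (h3 x).differentiableAt, by simp, ?_⟩
    rwa [show deriv F2 = F3 from funext fun x => (h3 x).deriv]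
  have hstep : ∀ n : WithTop ℕ∞, n ≤ 2 → n ≠ ⊤ → ContDiffOn ℝ n q (Ioo (-p0) p0) →
      ContDiffOn ℝ (n + 1) q (Ioo (-p0) p0) := by
    intro n hn hnt hcd
    rw [contDiffOn_succ_iff_deriv_of_isOpen isOpen_Ioo]
    refine ⟨fun p hp => (hdq p hp).differentiableAt.differentiableWithinAt,
      fun h => absurd h hnt, ?_⟩
    have : ContDiffOn ℝ n (fun p => q p / (F2 (q p) - p)) (Ioo (-p0) p0) :=
      hcd.div (((hF2c.of_le hn).comp_contDiffOn hcd).sub contDiffOn_id)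
        (fun p hp => (hQpos p hp).ne')
    exact this.congr fun p hp => (hdq p hp).deriv
  have hC0 : ContDiffOn ℝ 0 q (Ioo (-p0) p0) :=
    contDiffOn_zero.2 fun p hp => (hcq p hp).continuousWithinAt
  have hC1 : ContDiffOn ℝ 1 q (Ioo (-p0) p0) := by
    have := hstep 0 (by norm_num) (by simp) hC0
    simpa using this
  have hC2 : ContDiffOn ℝ 2 q (Ioo (-p0) p0) := by
    have := hstep 1 (by norm_num) (by simp) hC1
    rwa [show (1 : WithTop ℕ∞) + 1 = 2 by norm_num] at this
  have hC3 : ContDiffOn ℝ 3 q (Ioo (-p0) p0) := by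
    have := hstep 2 le_rfl (by exact WithTop.coe_ne_top) hC2
    rwa [show (2 : WithTop ℕ∞) + 1 = 3 by norm_num] at this
  refine ⟨q, fun p => q p / (F2 (q p) - p), fun p =>
    (q p / (F2 (q p) - p) * (F2 (q p) - p) - q p * (F3 (q p) * (q p / (F2 (q p) - p)) - 1))
      / (F2 (q p) - p) ^ 2, hq0, by simp [hq0], hC3, ?_⟩
  intro p hp
  have hqK : |q p| ≤ K := by rw [abs_of_pos (hq p hp).1.1]; exact (hq p hp).1.2.le
  have hinv : |(F2 (q p) - p)⁻¹| ≤ 2 * K := by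
    rw [abs_of_pos (inv_pos.2 (hQpos p hp))]
    have := inv_anti₀ (by positivity) (hQ p hp)
    simpa using this
  have hb1 : |q p / (F2 (q p) - p)| ≤ K * (2 * K) := by
    rw [div_eq_mul_inv]; exact aux_mul hqK hinv
  have hf3 := hb3 (q p) ⟨(hq p hp).1.1.le, (hq p hp).1.2.le⟩
  refine ⟨(hq p hp).1, (hq p hp).2, hdq p hp, ?_, ?_, ?_⟩
  · exact (hdq p hp).div (((h3 (q p)).comp p (hdq p hp)).sub (hasDerivAt_id p)) (hQpos p hp).ne'
  · refine hb1.trans ?_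
    have : 0 ≤ (K * (2 * K) + K * (K * (K * (2 * K)) + 1) * (2 * K)) * (2 * K) := by positivity
    linarith
  · have hne := (hQpos p hp).ne'
    have e : ∀ a b Q : ℝ, Q ≠ 0 → (a * Q - b) / Q ^ 2 = (a - b * Q⁻¹) * Q⁻¹ := by
      intro a b Q hQ; field_simp
    show |(q p / (F2 (q p) - p) * (F2 (q p) - p)
      - q p * (F3 (q p) * (q p / (F2 (q p) - p)) - 1)) / (F2 (q p) - p) ^ 2| ≤ _
    rw [e _ _ _ hne]
    have h9 := aux_mul (aux_sub hb1 (aux_mul (aux_mul hqK (aux_sub (aux_mul hf3 hb1)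
      (le_of_eq (abs_one (α := ℝ))))) hinv)) hinv
    refine h9.trans ?_
    have : 0 ≤ K * (2 * K) := by positivity
    linarith

/-- Minimisation from the first-order condition. -/
lemma aux_min {K p x0 : ℝ} {F F1 F2 : ℝ → ℝ} (hp : p ≤ 1 / K)
    (h1 : ∀ x, HasDerivAt F (F1 x) x) (h2 : ∀ x, HasDerivAt F1 (F2 x) x)
    (hb : ∀ x ∈ Icc (0:ℝ) K, 1 / K ≤ F2 x) (hx0 : x0 ∈ Ioo 0 K) (hF : F1 x0 = p * x0) :
    ∀ x ∈ Icc 0 K, F x0 - p * x0 ^ 2 / 2 ≤ F x - p * x ^ 2 / 2 := by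
  have hG : ∀ x, HasDerivAt (fun x => F x - p * x ^ 2 / 2) (F1 x - p * x) x := by
    intro x
    have := (h1 x).sub (((hasDerivAt_pow 2 x).const_mul p).div_const 2)
    refine this.congr_deriv ?_
    simp; ring
  have hc : Continuous (fun x => F x - p * x ^ 2 / 2) :=
    continuous_iff_continuousAt.2 fun x => (hG x).continuousAt
  intro x hx
  rcases le_total x0 x with h | h
  · have hm : MonotoneOn (fun x => F x - p * x ^ 2 / 2) (Icc x0 K) := by
      refine monotoneOn_of_deriv_nonneg (convex_Icc _ _) hc.continuousOn
        (fun z _ => (hG z).differentiableAt.differentiableWithinAt) ?_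
      intro z hz
      rw [interior_Icc] at hz
      rw [(hG z).deriv]
      have := aux_strong h2 hb hx0.1.le hz.1.le hz.2.le
      have h' : p * (z - x0) ≤ 1 / K * (z - x0) :=
        mul_le_mul_of_nonneg_right hp (by linarith [hz.1])
      linarith
    exact hm ⟨le_rfl, hx0.2.le⟩ ⟨h, hx.2⟩ h
  · have hm : AntitoneOn (fun x => F x - p * x ^ 2 / 2) (Icc 0 x0) := by
      refine antitoneOn_of_deriv_nonpos (convex_Icc _ _) hc.continuousOn
        (fun z _ => (hG z).differentiableAt.differentiableWithinAt) ?_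
      intro z hz
      rw [interior_Icc] at hz
      rw [(hG z).deriv]
      have := aux_strong h2 hb hz.1.le hz.2.le hx0.2.le
      have h' : p * (x0 - z) ≤ 1 / K * (x0 - z) :=
        mul_le_mul_of_nonneg_right hp (by linarith [hz.2])
      linarith
    exact hm ⟨hx.1, h⟩ ⟨hx0.1.le, le_rfl⟩ h

/-- Composition with a polynomial with bounded coefficients. -/
lemma aux_poly (K eps A : ℝ) (hK : 1 < K) (heps : 0 < eps) (hA : 0 < A) :
    ∃ ψ₁ > (0:ℝ), ∃ M > (0:ℝ), ∀ (σ : ℝ) (F F1 F2 F3 F4 : ℝ → ℝ) (a1 a2 a3 a4 a5 : ℝ),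
      eps ≤ σ → σ ≤ K - eps →
      (∀ x, HasDerivAt F (F1 x) x) →
      (∀ x, HasDerivAt F1 (F2 x) x) → (∀ x, HasDerivAt F2 (F3 x) x) →
      (∀ x, HasDerivAt F3 (F4 x) x) → Continuous F4 → F1 σ = 0 →
      (∀ x ∈ Icc (0:ℝ) K, 1 / K ≤ F2 x) → (∀ x ∈ Icc (0:ℝ) K, |F3 x| ≤ K) →
      |a1| ≤ A → |a2| ≤ A → |a3| ≤ A → |a4| ≤ A → |a5| ≤ A →
      ∃ ςs : ℝ → ℝ, (∀ ψ ∈ Ioo (-ψ₁) ψ₁, ςs ψ ∈ Ioo (0:ℝ) K) ∧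
          ContDiffOn ℝ 3 ςs (Ioo (-ψ₁) ψ₁) ∧ ςs 0 = σ ∧ HasDerivAt ςs (σ * a1 / F2 σ) 0 ∧
          (∀ ψ ∈ Ioo (-ψ₁) ψ₁, |deriv (deriv ςs) ψ| ≤ M) ∧
          ∀ ψ ∈ Ioo (-ψ₁) ψ₁,
            F1 (ςs ψ) = (a1 * ψ + a2 * ψ ^ 2 + a3 * ψ ^ 3 + a4 * ψ ^ 4 + a5 * ψ ^ 5) * ςs ψ ∧
            ∀ x ∈ Icc 0 K,
              F (ςs ψ) - (a1 * ψ + a2 * ψ ^ 2 + a3 * ψ ^ 3 + a4 * ψ ^ 4 + a5 * ψ ^ 5)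
                * (ςs ψ) ^ 2 / 2 ≤
              F x - (a1 * ψ + a2 * ψ ^ 2 + a3 * ψ ^ 3 + a4 * ψ ^ 4 + a5 * ψ ^ 5)
                * x ^ 2 / 2 := by
  have hK0 : 0 < K := by linarith
  obtain ⟨p0, hp0, hp0K, B, hB, H⟩ := aux_root K eps hK heps
  refine ⟨min 1 (p0 / (5 * A)), by positivity,
    B * (15 * A) * (15 * A) + B * (40 * A), by positivity, ?_⟩
  set ψ₁ := min 1 (p0 / (5 * A)) with hψ₁
  have hψpos : 0 < ψ₁ := by positivity
  intro σ F F1 F2 F3 F4 a1 a2 a3 a4 a5 hσ1 hσ2 h1 h2 h3 h4 hc4 h0 hb2 hb3 ha1 ha2 ha3 ha4 ha5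
  obtain ⟨q, q1, q2, hq0, hq10, hqC, hq⟩ := H σ F1 F2 F3 F4 hσ1 hσ2 h2 h3 h4 hc4 h0 hb2 hb3
  set P : ℝ → ℝ := fun ψ => a1 * ψ + a2 * ψ ^ 2 + a3 * ψ ^ 3 + a4 * ψ ^ 4 + a5 * ψ ^ 5 with hP
  set P1 : ℝ → ℝ := fun ψ => a1 + a2 * (2 * ψ) + a3 * (3 * ψ ^ 2) + a4 * (4 * ψ ^ 3)
    + a5 * (5 * ψ ^ 4) with hP1
  set P2 : ℝ → ℝ := fun ψ => a2 * 2 + a3 * (6 * ψ) + a4 * (12 * ψ ^ 2)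
    + a5 * (20 * ψ ^ 3) with hP2
  have hdP : ∀ ψ, HasDerivAt P (P1 ψ) ψ := by
    intro ψ
    have := ((((hasDerivAt_id ψ).const_mul a1).add ((hasDerivAt_pow 2 ψ).const_mul a2)).add
      ((hasDerivAt_pow 3 ψ).const_mul a3)).add ((hasDerivAt_pow 4 ψ).const_mul a4)
      |>.add ((hasDerivAt_pow 5 ψ).const_mul a5)
    refine this.congr_deriv ?_
    simp [hP1]
  have hdP1 : ∀ ψ, HasDerivAt P1 (P2 ψ) ψ := by
    intro ψ
    have := (((((hasDerivAt_id ψ).const_mul 2).const_mul a2).const_add a1).add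
      (((hasDerivAt_pow 2 ψ).const_mul 3).const_mul a3)).add
        (((hasDerivAt_pow 3 ψ).const_mul 4).const_mul a4)
      |>.add (((hasDerivAt_pow 4 ψ).const_mul 5).const_mul a5)
    refine this.congr_deriv ?_
    simp [hP2]; ring
  have hpw : ∀ ψ ∈ Ioo (-ψ₁) ψ₁, ∀ n : ℕ, |ψ ^ n| ≤ 1 := by
    intro ψ hψ n
    rw [abs_pow]
    refine pow_le_one₀ (abs_nonneg _) (abs_le.2 ?_)
    have : ψ₁ ≤ 1 := min_le_left _ _
    exact ⟨by linarith [hψ.1], by linarith [hψ.2]⟩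
  have hPm : ∀ ψ ∈ Ioo (-ψ₁) ψ₁, P ψ ∈ Ioo (-p0) p0 := by
    intro ψ hψ
    rw [mem_Ioo, ← abs_lt]
    have e : P ψ = (a1 + a2 * ψ ^ 1 + a3 * ψ ^ 2 + a4 * ψ ^ 3 + a5 * ψ ^ 4) * ψ := by
      simp only [hP]; ring
    have hlt : |ψ| < ψ₁ := abs_lt.2 hψ
    have h5 : |a1 + a2 * ψ ^ 1 + a3 * ψ ^ 2 + a4 * ψ ^ 3 + a5 * ψ ^ 4|
        ≤ A + A * 1 + A * 1 + A * 1 + A * 1 :=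
      aux_add (aux_add (aux_add (aux_add ha1 (aux_mul ha2 (hpw ψ hψ 1)))
        (aux_mul ha3 (hpw ψ hψ 2))) (aux_mul ha4 (hpw ψ hψ 3))) (aux_mul ha5 (hpw ψ hψ 4))
    rw [e]
    refine (aux_mul h5 le_rfl).trans_lt ?_
    have h6 : |ψ| < p0 / (5 * A) := hlt.trans_le (min_le_right _ _)
    rw [lt_div_iff₀ (by positivity)] at h6
    linarith
  have hP1b : ∀ ψ ∈ Ioo (-ψ₁) ψ₁, |P1 ψ| ≤ 15 * A := by
    intro ψ hψ
    have k : ∀ (c : ℝ), 0 ≤ c → ∀ n : ℕ, |c * ψ ^ n| ≤ c * 1 := fun c hc n =>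
      aux_mul (abs_of_nonneg hc).le (hpw ψ hψ n)
    have k1 : |2 * ψ| ≤ 2 * 1 := by simpa using k 2 (by norm_num) 1
    have := aux_add (aux_add (aux_add (aux_add ha1 (aux_mul ha2 k1))
        (aux_mul ha3 (k 3 (by norm_num) 2))) (aux_mul ha4 (k 4 (by norm_num) 3)))
        (aux_mul ha5 (k 5 (by norm_num) 4))
    refine this.trans (le_of_eq ?_)
    ring
  have hP2b : ∀ ψ ∈ Ioo (-ψ₁) ψ₁, |P2 ψ| ≤ 40 * A := by
    intro ψ hψ
    have k : ∀ (c : ℝ), 0 ≤ c → ∀ n : ℕ, |c * ψ ^ n| ≤ c * 1 := fun c hc n =>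
      aux_mul (abs_of_nonneg hc).le (hpw ψ hψ n)
    have k1 : |6 * ψ| ≤ 6 * 1 := by simpa using k 6 (by norm_num) 1
    have k0 : |(2:ℝ)| ≤ 2 := by norm_num
    have := aux_add (aux_add (aux_add (aux_mul ha2 k0)
        (aux_mul ha3 k1)) (aux_mul ha4 (k 12 (by norm_num) 2)))
        (aux_mul ha5 (k 20 (by norm_num) 3))
    refine this.trans (le_of_eq ?_)
    ring
  have hd : ∀ ψ ∈ Ioo (-ψ₁) ψ₁, HasDerivAt (fun ψ => q (P ψ)) (q1 (P ψ) * P1 ψ) ψ :=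
    fun ψ hψ => (hq _ (hPm ψ hψ)).2.2.1.comp ψ (hdP ψ)
  have hPC : ContDiff ℝ 3 P := by simp only [hP]; fun_prop
  refine ⟨fun ψ => q (P ψ), fun ψ hψ => (hq _ (hPm ψ hψ)).1, hqC.comp hPC.contDiffOn hPm, ?_, ?_,
    ?_, fun ψ hψ => ⟨(hq _ (hPm ψ hψ)).2.1, ?_⟩⟩
  · simp [hP, hq0]
  · refine (hd 0 ⟨by linarith, hψpos⟩).congr_deriv ?_
    have e0 : P 0 = 0 := by simp [hP]
    have e1 : P1 0 = a1 := by simp [hP1]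
    rw [e0, e1, hq10]; ring
  · intro ψ hψ
    have he : deriv (fun ψ => q (P ψ)) =ᶠ[nhds ψ] fun ψ => q1 (P ψ) * P1 ψ := by
      filter_upwards [isOpen_Ioo.mem_nhds hψ] with z hz using (hd z hz).deriv
    have hdd : HasDerivAt (fun ψ => q1 (P ψ) * P1 ψ)
        (q2 (P ψ) * P1 ψ * P1 ψ + q1 (P ψ) * P2 ψ) ψ :=
      ((hq _ (hPm ψ hψ)).2.2.2.1.comp ψ (hdP ψ)).mul (hdP1 ψ)
    rw [he.deriv_eq, hdd.deriv]
    have b := (hq _ (hPm ψ hψ)).2.2.2.2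
    exact aux_add (aux_mul (aux_mul b.2 (hP1b ψ hψ)) (hP1b ψ hψ)) (aux_mul b.1 (hP2b ψ hψ))
  · have hle : P ψ ≤ 1 / K := by
      have : 1 / (2 * K) ≤ 1 / K := by gcongr; linarith
      linarith [(hPm ψ hψ).2]
    exact aux_min hle h1 h2 hb2 (hq _ (hPm ψ hψ)).1 (hq _ (hPm ψ hψ)).2.1

/-- **Smooth dependence of the worst-case volatility on the uncertainty-aversion parameter.**
For every `L > 0` there are `ψ₁ > 0` and `M > 0` such that for every `(t,s,y) ∈ D` and
`ϑ̃ ∈ [-L,L]` there is a `C³` function `ς* : (-ψ₁,ψ₁) → (0,K)` with `ς*(0) = σ̄(t,s)`,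
`(dς*/dψ)(0) = σ̃(t,s,y)`, `|d²ς*/dψ²| ≤ M`, satisfying the first-order condition for all
`ψ ∈ (-ψ₁,ψ₁)` and minimising the Hamiltonian over `[0,K]` for each `ψ ∈ (0,ψ₁)`. -/
theorem smooth_worst_case_volatility (d : HedgeData) (hd : d.Assumptions) (L : ℝ) (hL : 0 < L) :
    ∃ ψ₁ > (0:ℝ), ∃ M > (0:ℝ),
      ∀ t ∈ Ioo (0:ℝ) d.T, ∀ s ∈ Ioo d.K⁻¹ d.K, ∀ y ∈ Ioo d.yl d.yu, ∀ ϑ ∈ Icc (-L) L,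
        ∃ ςs : ℝ → ℝ,
          (∀ ψ ∈ Ioo (-ψ₁) ψ₁, ςs ψ ∈ Ioo (0:ℝ) d.K) ∧
          ContDiffOn ℝ 3 ςs (Ioo (-ψ₁) ψ₁) ∧
          ςs 0 = d.sb t s ∧
          HasDerivAt ςs (d.sigmaTilde t s y) 0 ∧
          (∀ ψ ∈ Ioo (-ψ₁) ψ₁, |deriv (deriv ςs) ψ| ≤ M) ∧
          (∀ ψ ∈ Ioo (-ψ₁) ψ₁,
            d.U1 y * d.f1 t s y (ςs ψ) - s ^ 2 * d.Vss t s * ςs ψ * d.wPsiY ψ t s y * ψ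
              + ςs ψ * s ^ 2 * (d.wPsiSS ψ t s y + 2 * ϑ * ψ * d.wPsiSY ψ t s y
                + ϑ ^ 2 * ψ ^ 2 * d.wPsiYY ψ t s y) * ψ = 0) ∧
          (∀ ψ ∈ Ioo (0:ℝ) ψ₁,
            IsMinOn (fun ς => d.Ham ψ t s y (d.Vs t s + ϑ * ψ) ς) (Icc (0:ℝ) d.K) (ςs ψ)) := by
  classical
  have hK := hd.hK
  have hK0 : 0 < d.K := by linarith
  have hU1c : Continuous d.U1 := continuous_iff_continuousAt.2 fun x => (hd.U_deriv2 x).continuousAt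
  have hU2c : Continuous d.U2 := continuous_iff_continuousAt.2 fun x => (hd.U_deriv3 x).continuousAt
  obtain ⟨C1, hC1⟩ := (isCompact_Icc (a := d.yl) (b := d.yu)).exists_bound_of_continuousOn
    ((hU2c.div hU1c fun y => (hd.U1_pos y).ne').continuousOn)
  obtain ⟨C2, hC2⟩ := (isCompact_Icc (a := d.yl) (b := d.yu)).exists_bound_of_continuousOn
    ((hd.U3_cont.div hU1c fun y => (hd.U1_pos y).ne').continuousOn)
  have hcomp : IsCompact (Icc 0 d.T ×ˢ Icc d.K⁻¹ d.K ×ˢ Icc d.yl d.yu) :=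
    isCompact_Icc.prod (isCompact_Icc.prod isCompact_Icc)
  obtain ⟨C3, hC3⟩ := hcomp.exists_bound_of_continuousOn hd.wt_cont
  obtain ⟨C4, hC4⟩ := hcomp.exists_bound_of_continuousOn hd.wh_cont
  obtain ⟨C, hCK, hCL, hCC1, hCC2, hCC3, hCC4⟩ : ∃ C : ℝ, d.K ≤ C ∧ L ≤ C ∧ C1 ≤ C ∧ C2 ≤ C ∧
      C3 ≤ C ∧ C4 ≤ C :=
    ⟨max d.K (max L (max C1 (max C2 (max C3 C4)))), by simp, by simp, by simp, by simp, by simp,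
      by simp⟩
  have hC : 1 ≤ C := by linarith
  obtain ⟨ψ₁, hψ₁, M, hM, H⟩ := aux_poly d.K d.eps (8 * C ^ 6) hK hd.heps (by positivity)
  refine ⟨ψ₁, hψ₁, M, hM, ?_⟩
  intro t ht s hs y hy ϑ hϑ
  have ht' := Ioo_subset_Icc_self ht
  have hs' := Ioo_subset_Icc_self hs
  have hy' := Ioo_subset_Icc_self hy
  have hu := hd.U1_pos y
  obtain ⟨u, hudef⟩ : ∃ u, u = d.U1 y := ⟨_, rfl⟩
  rw [← hudef] at hu
  obtain ⟨r, hr⟩ : ∃ r, r = d.U2 y / d.U1 y := ⟨_, rfl⟩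
  obtain ⟨r', hr'⟩ : ∃ r', r' = d.U3 y / d.U1 y := ⟨_, rfl⟩
  have hrU : d.U2 y = u * r := by rw [hr, ← hudef]; field_simp
  have hrU' : d.U3 y = u * r' := by rw [hr', ← hudef]; field_simp
  have br : |r| ≤ C := by rw [hr]; exact (hC1 y hy').trans hCC1
  have br' : |r'| ≤ C := by rw [hr']; exact (hC2 y hy').trans hCC2
  have bt : |d.wt t s y| ≤ C := (hC3 (t, s, y) ⟨ht', hs', hy'⟩).trans hCC3
  have bh : |d.wh t s y| ≤ C := (hC4 (t, s, y) ⟨ht', hs', hy'⟩).trans hCC4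
  have btS := (hd.wt_bdd d.wtS (by simp) t ht s hs y hy).trans hCK
  have btY := (hd.wt_bdd d.wtY (by simp) t ht s hs y hy).trans hCK
  have btSS := (hd.wt_bdd d.wtSS (by simp) t ht s hs y hy).trans hCK
  have btSY := (hd.wt_bdd d.wtSY (by simp) t ht s hs y hy).trans hCK
  have btYY := (hd.wt_bdd d.wtYY (by simp) t ht s hs y hy).trans hCK
  have bhS := (hd.wh_bdd d.whS (by simp) t ht s hs y hy).trans hCK
  have bhY := (hd.wh_bdd d.whY (by simp) t ht s hs y hy).trans hCK
  have bhSS := (hd.wh_bdd d.whSS (by simp) t ht s hs y hy).trans hCK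
  have bhSY := (hd.wh_bdd d.whSY (by simp) t ht s hs y hy).trans hCK
  have bhYY := (hd.wh_bdd d.whYY (by simp) t ht s hs y hy).trans hCK
  have bV := (hd.Vss_bdd t ht s hs).trans hCK
  have hs0 : 0 < s := lt_trans (by positivity) hs.1
  have bs : |s ^ 2| ≤ C * C := by
    rw [pow_two]
    have : |s| ≤ C := by rw [abs_of_pos hs0]; linarith [hs.2]
    exact aux_mul this this
  have bϑ : |ϑ| ≤ C := (abs_le.2 hϑ).trans hCL
  have bϑ2 : |ϑ ^ 2| ≤ C * C := by rw [pow_two]; exact aux_mul bϑ bϑ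
  have b2 : |(2:ℝ)| ≤ 2 := by norm_num
  have hpow : ∀ n m : ℕ, n ≤ m → C ^ n ≤ C ^ m := fun n m h => pow_le_pow_right₀ hC h
  have p16 := hpow 1 6 (by norm_num)
  have p26 := hpow 2 6 (by norm_num)
  have p36 := hpow 3 6 (by norm_num)
  have p46 := hpow 4 6 (by norm_num)
  have p56 := hpow 5 6 (by norm_num)
  have p6 : 0 < C ^ 6 := by positivity
  have k1 : |s ^ 2 * d.Vss t s| ≤ 8 * C ^ 6 := bV.trans (by nlinarith)
  have k2 : |s ^ 2 * d.wtSS t s y - s ^ 2 * d.Vss t s * (r * d.wt t s y + d.wtY t s y)|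
      ≤ 8 * C ^ 6 := by
    refine (aux_sub (aux_mul bs btSS) (aux_mul bV (aux_add (aux_mul br bt) btY))).trans ?_
    ring_nf at *; linarith
  have k3 : |s ^ 2 * d.Vss t s * (r * d.wh t s y + d.whY t s y) - s ^ 2 * d.whSS t s y
      + 2 * (s ^ 2 * (ϑ * (r * d.wtS t s y + d.wtSY t s y))) - s ^ 2 * (ϑ ^ 2 * r)|
      ≤ 8 * C ^ 6 := by
    refine (aux_sub (aux_add (aux_sub (aux_mul bV (aux_add (aux_mul br bh) bhY))
      (aux_mul bs bhSS)) (aux_mul b2 (aux_mul bs (aux_mul bϑ (aux_add (aux_mul br btS) btSY)))))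
      (aux_mul bs (aux_mul bϑ2 br))).trans ?_
    ring_nf at *; linarith
  have k4 : |s ^ 2 * (ϑ ^ 2 * (r' * d.wt t s y + 2 * (r * d.wtY t s y) + d.wtYY t s y))
      - 2 * (s ^ 2 * (ϑ * (r * d.whS t s y + d.whSY t s y)))| ≤ 8 * C ^ 6 := by
    refine (aux_sub (aux_mul bs (aux_mul bϑ2 (aux_add (aux_add (aux_mul br' bt)
      (aux_mul b2 (aux_mul br btY))) btYY)))
      (aux_mul b2 (aux_mul bs (aux_mul bϑ (aux_add (aux_mul br bhS) bhSY))))).trans ?_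
    ring_nf at *; linarith
  have k5 : |-(s ^ 2 * (ϑ ^ 2 * (r' * d.wh t s y + 2 * (r * d.whY t s y) + d.whYY t s y)))|
      ≤ 8 * C ^ 6 := by
    rw [abs_neg]
    refine (aux_mul bs (aux_mul bϑ2 (aux_add (aux_add (aux_mul br' bh)
      (aux_mul b2 (aux_mul br bhY))) bhYY))).trans ?_
    ring_nf at *; linarith
  obtain ⟨ςs, g1, g2, g3, g4, g5, g6⟩ := H (d.sb t s) (d.f t s y) (d.f1 t s y) (d.f2 t s y)
    (d.f3 t s y) (d.f4 t s y) _ _ _ _ _ (hd.sb_lb t ht' s hs) (hd.sb_ub t ht' s hs)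
    (hd.f_deriv1 t s y) (hd.f_deriv2 t s y) (hd.f_deriv3 t s y) (hd.f_deriv4 t s y)
    (hd.f4_cont t s y) (hd.f_min t ht s hs y hy).2
    (fun x hx => (hd.f2_bdd t ht s hs y hy x hx).1)
    (fun x hx => (hd.f34_bdd t ht s hs y hy x hx).1) k1 k2 k3 k4 k5
  refine ⟨ςs, g1, g2, g3, ?_, g5, ?_, ?_⟩
  · refine g4.congr_deriv ?_
    simp only [HedgeData.sigmaTilde]; ring
  · intro ψ hψ
    have h := (g6 ψ hψ).1
    simp only [HedgeData.wPsiY, HedgeData.wPsiSS, HedgeData.wPsiSY, HedgeData.wPsiYY, ← hudef,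
      hrU, hrU']
    rw [h]
    ring
  · intro ψ hψ
    have h := (g6 ψ ⟨by linarith [hψ.1], hψ.2⟩).2
    rw [isMinOn_iff]
    intro x hx
    have hx := h x hx
    have hψ0 : 0 < ψ := hψ.1
    have key : ∀ x, d.Ham ψ t s y (d.Vs t s + ϑ * ψ) x = u / ψ * (d.f t s y x -
        (s ^ 2 * d.Vss t s * ψ
        + (s ^ 2 * d.wtSS t s y - s ^ 2 * d.Vss t s * (r * d.wt t s y + d.wtY t s y)) * ψ ^ 2
        + (s ^ 2 * d.Vss t s * (r * d.wh t s y + d.whY t s y) - s ^ 2 * d.whSS t s y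
      + 2 * (s ^ 2 * (ϑ * (r * d.wtS t s y + d.wtSY t s y))) - s ^ 2 * (ϑ ^ 2 * r)) * ψ ^ 3
        + (s ^ 2 * (ϑ ^ 2 * (r' * d.wt t s y + 2 * (r * d.wtY t s y) + d.wtYY t s y))
      - 2 * (s ^ 2 * (ϑ * (r * d.whS t s y + d.whSY t s y)))) * ψ ^ 4
        + (-(s ^ 2 * (ϑ ^ 2 * (r' * d.wh t s y + 2 * (r * d.whY t s y) + d.whYY t s y)))) * ψ ^ 5)
          * x ^ 2 / 2)
        + 1 / 2 * s ^ 2 * d.Vss t s * (d.sb t s) ^ 2 * d.wPsiY ψ t s y := by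
      intro x
      simp only [HedgeData.Ham, HedgeData.wPsiY, HedgeData.wPsiSS, HedgeData.wPsiSY,
        HedgeData.wPsiYY, ← hudef, hrU, hrU', add_sub_cancel_left]
      field_simp
      ring
    rw [key, key]
    gcongr
end

section
/- Existence and characterisation of the almost optimal strategy (Lemma on the optimal strategy): there exist constants C₁ > 0 and ψ₁ > 0 such that for every (t,s,y) ∈ D and every ψ ∈ (0,ψ₁) there exists a real number ϑ* = ϑ*(t,s,y,ψ), not depending on ς, such that for every ς ∈ [0,K] the point ϑ* maximises the function ϑ ↦ H^ψ(t,s,y; ϑ, ς) over ℝ, satisfies the first-order condition ∂H^ψ/∂ϑ (t,s,y; ϑ*, ς) = 0, and satisfies the estimate |ϑ* − θ^ψ(t,s,y)| ≤ C₁ ψ². -/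
open Set

/-- The pure algebra: the vertex of the quadratic is close to the linear expansion. -/
theorem optimal_strategy_aux {M c ψ u A B P Q th : ℝ} (hM : 0 < M) (hc : 0 < c)
    (hu : u ≤ -c) (hA : |A| ≤ M) (hB : |B| ≤ M) (hQ : |Q| ≤ M) (hth : |th| ≤ M)
    (hP : P = u * th) (h0 : 0 < ψ) (h1 : ψ < min 1 (c / (4 * M))) :
    u - A * ψ + B * ψ ^ 2 < 0 ∧
    |-(-P * ψ + Q * ψ ^ 2) / (u - A * ψ + B * ψ ^ 2) - th * ψ|
      ≤ (2 * (M + 2 * M ^ 2) / c) * ψ ^ 2 := by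
  obtain ⟨h11, h12⟩ := lt_min_iff.1 h1
  rw [lt_div_iff₀ (by positivity)] at h12
  have hAB : |-A + B * ψ| ≤ 2 * M := by
    have h2 : |B * ψ| ≤ M * 1 := by
      rw [abs_mul, abs_of_pos h0]
      exact mul_le_mul hB h11.le h0.le hM.le
    calc |-A + B * ψ| ≤ |-A| + |B * ψ| := abs_add_le _ _
      _ ≤ 2 * M := by rw [abs_neg]; linarith
  have hw : u - A * ψ + B * ψ ^ 2 ≤ -(c / 2) := by
    have h3 : (-A + B * ψ) * ψ ≤ 2 * M * ψ :=
      mul_le_mul_of_nonneg_right ((le_abs_self _).trans hAB) h0.le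
    nlinarith
  have hneg : u - A * ψ + B * ψ ^ 2 < 0 := by linarith
  refine ⟨hneg, ?_⟩
  have hE : -(-P * ψ + Q * ψ ^ 2) / (u - A * ψ + B * ψ ^ 2) - th * ψ
      = -(ψ ^ 2 * (Q + th * (-A + B * ψ))) / (u - A * ψ + B * ψ ^ 2) := by
    rw [eq_div_iff hneg.ne, sub_mul, div_mul_cancel₀ _ hneg.ne, hP]
    ring
  rw [hE, abs_div, abs_neg, abs_mul, abs_of_nonneg (sq_nonneg ψ), abs_of_neg hneg,
    div_le_iff₀ (by linarith)]
  have hN : |Q + th * (-A + B * ψ)| ≤ M + 2 * M ^ 2 := by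
    calc |Q + th * (-A + B * ψ)| ≤ |Q| + |th * (-A + B * ψ)| := abs_add_le _ _
      _ ≤ M + M * (2 * M) := by
        rw [abs_mul]
        exact add_le_add hQ (mul_le_mul hth hAB (abs_nonneg _) hM.le)
      _ = _ := by ring
  calc ψ ^ 2 * |Q + th * (-A + B * ψ)| ≤ ψ ^ 2 * (M + 2 * M ^ 2) := by gcongr
    _ = (2 * (M + 2 * M ^ 2) / c) * ψ ^ 2 * (c / 2) := by field_simp
    _ ≤ _ := by
      apply mul_le_mul_of_nonneg_left _ (by positivity)
      linarith

theorem optimal_strategy_abs {L a b c x y z : ℝ} (hL : 0 ≤ L) (ha : |a| ≤ L) (hb : |b| ≤ L)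
    (hc : |c| ≤ L) (hx : |x| ≤ L) (hy : |y| ≤ L) (hz : |z| ≤ L) :
    |a * x + 2 * b * y + c * z| ≤ 4 * L ^ 2 := by
  have h1 : |a * x| ≤ L * L := by rw [abs_mul]; gcongr
  have h2 : |b * y| ≤ L * L := by rw [abs_mul]; gcongr
  have h3 : |c * z| ≤ L * L := by rw [abs_mul]; gcongr
  rw [abs_le] at *
  constructor <;> nlinarith

/-- **Existence and characterisation of the almost optimal strategy.**
There are `C₁ > 0` and `ψ₁ > 0` such that for every `(t,s,y) ∈ D` and every `ψ ∈ (0,ψ₁)`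
there is a real number `ϑ*`, not depending on `ς`, such that for every `ς ∈ [0,K]` the
point `ϑ*` maximises `ϑ ↦ H^ψ(t,s,y;ϑ,ς)` over `ℝ`, satisfies the first-order condition
`∂H^ψ/∂ϑ = 0`, and satisfies `|ϑ* - θ^ψ(t,s,y)| ≤ C₁ ψ²`. -/
theorem optimal_strategy (d : HedgeData) (hd : d.Assumptions) :
    ∃ C₁ > (0:ℝ), ∃ ψ₁ > (0:ℝ),
      ∀ t ∈ Ioo (0:ℝ) d.T, ∀ s ∈ Ioo d.K⁻¹ d.K, ∀ y ∈ Ioo d.yl d.yu, ∀ ψ ∈ Ioo (0:ℝ) ψ₁,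
        ∃ ϑs : ℝ,
          (∀ ς ∈ Icc (0:ℝ) d.K,
            (∀ ϑ : ℝ, d.Ham ψ t s y ϑ ς ≤ d.Ham ψ t s y ϑs ς) ∧
            HasDerivAt (fun ϑ => d.Ham ψ t s y ϑ ς) 0 ϑs) ∧
          |ϑs - d.thetaPsi ψ t s y| ≤ C₁ * ψ ^ 2 := by
  have hc2 : Continuous d.U2 :=
    continuous_iff_continuousAt.2 fun y => (hd.U_deriv3 y).continuousAt
  have hc1 : Continuous d.U1 :=
    continuous_iff_continuousAt.2 fun y => (hd.U_deriv2 y).continuousAt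
  have hI : IsCompact (Icc d.yl d.yu) := isCompact_Icc
  have hD : IsCompact (Icc 0 d.T ×ˢ Icc d.K⁻¹ d.K ×ˢ Icc d.yl d.yu) :=
    isCompact_Icc.prod (isCompact_Icc.prod isCompact_Icc)
  obtain ⟨L1, hL1⟩ := hI.exists_bound_of_continuousOn hc1.continuousOn
  obtain ⟨L2, hL2⟩ := hI.exists_bound_of_continuousOn hc2.continuousOn
  obtain ⟨L3, hL3⟩ := hI.exists_bound_of_continuousOn hd.U3_cont.continuousOn
  obtain ⟨L4, hL4⟩ := hD.exists_bound_of_continuousOn hd.wt_cont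
  obtain ⟨L5, hL5⟩ := hD.exists_bound_of_continuousOn hd.wh_cont
  obtain ⟨y0, -, hy0⟩ := hI.exists_isMaxOn (nonempty_Icc.2 hd.hy.le) hc2.continuousOn
  obtain ⟨c, hc, hcU⟩ : ∃ c > 0, ∀ y ∈ Icc d.yl d.yu, d.U2 y ≤ -c :=
    ⟨-d.U2 y0, by linarith [hd.U2_neg y0], fun y hy => by simpa using hy0 hy⟩
  have hK := hd.hK
  obtain ⟨L, hLK, h1, h2, h3, h4, h5⟩ :
      ∃ L, d.K ≤ L ∧ L1 ≤ L ∧ L2 ≤ L ∧ L3 ≤ L ∧ L4 ≤ L ∧ L5 ≤ L :=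
    ⟨d.K + |L1| + |L2| + |L3| + |L4| + |L5|, by
      have := abs_nonneg L1
      have := abs_nonneg L2
      have := abs_nonneg L3
      have := abs_nonneg L4
      have := abs_nonneg L5
      have := le_abs_self L1
      have := le_abs_self L2
      have := le_abs_self L3
      have := le_abs_self L4
      have := le_abs_self L5
      refine ⟨?_, ?_, ?_, ?_, ?_, ?_⟩ <;> linarith⟩
  have hL : 0 < L := by linarith
  obtain ⟨M, hMd⟩ : ∃ M, M = 4 * L ^ 2 + (L + L / c * L) := ⟨_, rfl⟩
  have hM4 : 4 * L ^ 2 ≤ M := by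
    have : 0 ≤ L + L / c * L := by positivity
    linarith
  have hMt : L + L / c * L ≤ M := by
    have : 0 ≤ 4 * L ^ 2 := by positivity
    linarith
  have hM : 0 < M := by
    have : 0 < 4 * L ^ 2 := by positivity
    linarith
  refine ⟨2 * (M + 2 * M ^ 2) / c, by positivity, min 1 (c / (4 * M)), by positivity, ?_⟩
  intro t ht s hs y hy ψ hψ
  have hyI := Ioo_subset_Icc_self hy
  have hp : (t, s, y) ∈ Icc 0 d.T ×ˢ Icc d.K⁻¹ d.K ×ˢ Icc d.yl d.yu :=
    ⟨Ioo_subset_Icc_self ht, Ioo_subset_Icc_self hs, hyI⟩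
  have e1 : |d.U1 y| ≤ L := (hL1 y hyI).trans h1
  have e2 : |d.U2 y| ≤ L := (hL2 y hyI).trans h2
  have e3 : |d.U3 y| ≤ L := (hL3 y hyI).trans h3
  have e4 : |d.wt t s y| ≤ L := (hL4 _ hp).trans h4
  have e5 : |d.wh t s y| ≤ L := (hL5 _ hp).trans h5
  have bt := fun g hg => (hd.wt_bdd g hg t ht s hs y hy).trans hLK
  have bh := fun g hg => (hd.wh_bdd g hg t ht s hs y hy).trans hLK
  have t1 := bt d.wtS (by simp)
  have t2 := bt d.wtY (by simp)
  have t3 := bt d.wtSY (by simp)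
  have t4 := bt d.wtYY (by simp)
  have g1 := bh d.whS (by simp)
  have g2 := bh d.whY (by simp)
  have g3 := bh d.whSY (by simp)
  have g4 := bh d.whYY (by simp)
  have hU2 := hd.U2_neg y
  have hu := hcU y hyI
  have hz : |(0:ℝ)| ≤ L := by simpa using hL.le
  have hQ : |d.U2 y * d.whS t s y + d.U1 y * d.whSY t s y| ≤ M := by
    have := optimal_strategy_abs hL.le e2 hz e1 g1 hz g3
    simp only [mul_zero, add_zero] at this
    exact this.trans hM4
  have hth : |d.thetaTilde t s y| ≤ M := by
    have h6 : |d.U1 y / d.U2 y| ≤ L / c := by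
      rw [abs_div, abs_of_neg hU2]
      exact div_le_div₀ hL.le e1 hc (by linarith)
    have h7 : |d.U1 y / d.U2 y * d.wtSY t s y| ≤ L / c * L := by
      rw [abs_mul]
      exact mul_le_mul h6 t3 (abs_nonneg _) (by positivity)
    exact (abs_add_le _ _).trans ((add_le_add t1 h7).trans hMt)
  have hP : d.U2 y * d.wtS t s y + d.U1 y * d.wtSY t s y = d.U2 y * d.thetaTilde t s y := by
    unfold HedgeData.thetaTilde
    have := hU2.ne
    field_simp
  obtain ⟨hneg, hest⟩ := optimal_strategy_aux hM hc hu
    ((optimal_strategy_abs hL.le e3 e2 e1 e4 t2 t4).trans hM4)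
    ((optimal_strategy_abs hL.le e3 e2 e1 e5 g2 g4).trans hM4) hQ hth hP hψ.1 hψ.2
  change d.wPsiYY ψ t s y < 0 at hneg
  change |-d.wPsiSY ψ t s y / d.wPsiYY ψ t s y - d.thetaTilde t s y * ψ| ≤ _ at hest
  obtain ⟨x, hx⟩ : ∃ x, x = -d.wPsiSY ψ t s y / d.wPsiYY ψ t s y := ⟨_, rfl⟩
  rw [← hx] at hest
  rw [eq_div_iff hneg.ne] at hx
  have hSY : d.wPsiSY ψ t s y = -(x * d.wPsiYY ψ t s y) := by linarith
  refine ⟨d.Vs t s + x, fun ς _ => ⟨fun ϑ => ?_, ?_⟩, ?_⟩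
  · have key : d.Ham ψ t s y (d.Vs t s + x) ς - d.Ham ψ t s y ϑ ς
        = 1 / 2 * (ς * s * (ϑ - d.Vs t s - x)) ^ 2 * (-d.wPsiYY ψ t s y) := by
      unfold HedgeData.Ham
      rw [hSY]
      ring
    have : 0 ≤ 1 / 2 * (ς * s * (ϑ - d.Vs t s - x)) ^ 2 * (-d.wPsiYY ψ t s y) :=
      mul_nonneg (by positivity) (by linarith)
    linarith
  · unfold HedgeData.Ham
    have hb : HasDerivAt (fun ϑ : ℝ => ϑ - d.Vs t s) 1 (d.Vs t s + x) :=
      (hasDerivAt_id _).sub_const _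
    have := ((((((hb.const_mul 2).mul_const (d.wPsiSY ψ t s y)).const_add
      (d.wPsiSS ψ t s y)).add ((hb.pow 2).mul_const (d.wPsiYY ψ t s y))).const_mul
      (1 / 2 * ς ^ 2 * s ^ 2)).const_add (1 / ψ * d.U1 y * d.f t s y ς
        + 1 / 2 * s ^ 2 * d.Vss t s * ((d.sb t s) ^ 2 - ς ^ 2) * d.wPsiY ψ t s y))
    refine this.congr_deriv ?_
    rw [hSY]
    push_cast
    ring
  · have : d.Vs t s + x - d.thetaPsi ψ t s y = x - d.thetaTilde t s y * ψ := by
      unfold HedgeData.thetaPsi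
      ring
    rw [this]
    exact hest
end

section
/- Smooth dependence of the optimal strategy on the uncertainty-aversion parameter: there exists ψ₁ > 0 such that for every (t,s,y) ∈ D one has w^ψ_yy(t,s,y) < 0 for all ψ ∈ (−ψ₁,ψ₁), and the function ϑ* : (−ψ₁,ψ₁) → ℝ defined by ϑ*(ψ) := V̄_s(t,s) − w^ψ_sy(t,s,y)/w^ψ_yy(t,s,y) is infinitely differentiable in ψ, satisfies w^ψ_sy(t,s,y) + (ϑ*(ψ) − V̄_s(t,s)) w^ψ_yy(t,s,y) = 0 for all ψ ∈ (−ψ₁,ψ₁), and satisfies ϑ*(0) = V̄_s(t,s) and (dϑ*/dψ)(0) = θ̃(t,s,y); moreover, for each ψ ∈ (0,ψ₁) and each ς ∈ [0,K], ϑ*(ψ) maximises ϑ ↦ H^ψ(t,s,y; ϑ, ς) over ℝ. -/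
open Set

/-- Uniform bound for the coefficients of `w_yy`. -/
lemma coef_bound {u1 u2 u3 w wy wyy C M K : ℝ} (h1 : |u1| ≤ C) (h2 : |u2| ≤ C) (h3 : |u3| ≤ C)
    (hw : |w| ≤ M) (hwy : |wy| ≤ K) (hwyy : |wyy| ≤ K) :
    |u3 * w + 2 * u2 * wy + u1 * wyy| ≤ C * M + 2 * C * K + C * K := by
  have hC : 0 ≤ C := (abs_nonneg _).trans h1
  have e1 : |u3 * w| ≤ C * M := by
    rw [abs_mul]; exact mul_le_mul h3 hw (abs_nonneg _) hC
  have e2 : |2 * u2 * wy| ≤ 2 * C * K := by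
    rw [abs_mul, abs_mul, abs_two]
    exact mul_le_mul (by linarith) hwy (abs_nonneg _) (by linarith)
  have e3 : |u1 * wyy| ≤ C * K := by
    rw [abs_mul]; exact mul_le_mul h1 hwyy (abs_nonneg _) hC
  exact (abs_add_le _ _).trans (add_le_add ((abs_add_le _ _).trans (add_le_add e1 e2)) e3)

lemma wyy_neg_uniform (d : HedgeData) (hd : d.Assumptions) :
    ∃ ψ₁ > (0:ℝ),
      ∀ t ∈ Ioo (0:ℝ) d.T, ∀ s ∈ Ioo d.K⁻¹ d.K, ∀ y ∈ Ioo d.yl d.yu,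
        ∀ ψ ∈ Ioo (-ψ₁) ψ₁, d.wPsiYY ψ t s y < 0 := by
  have hU1c : Continuous d.U1 :=
    continuous_iff_continuousAt.2 fun y => (hd.U_deriv2 y).continuousAt
  have hU2c : Continuous d.U2 :=
    continuous_iff_continuousAt.2 fun y => (hd.U_deriv3 y).continuousAt
  have hcy : IsCompact (Icc d.yl d.yu) := isCompact_Icc
  have hcb : IsCompact (Icc 0 d.T ×ˢ Icc d.K⁻¹ d.K ×ˢ Icc d.yl d.yu) :=
    isCompact_Icc.prod (isCompact_Icc.prod isCompact_Icc)
  obtain ⟨C1, hC1⟩ := hcy.exists_bound_of_continuousOn hU1c.continuousOn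
  obtain ⟨C2, hC2⟩ := hcy.exists_bound_of_continuousOn hU2c.continuousOn
  obtain ⟨C3, hC3⟩ := hcy.exists_bound_of_continuousOn hd.U3_cont.continuousOn
  obtain ⟨M1, hM1⟩ := hcb.exists_bound_of_continuousOn hd.wt_cont
  obtain ⟨M2, hM2⟩ := hcb.exists_bound_of_continuousOn hd.wh_cont
  obtain ⟨y0, hy0, hmax⟩ := hcy.exists_isMaxOn ⟨d.yl, left_mem_Icc.2 hd.hy.le⟩ hU2c.continuousOn
  have hc := hd.U2_neg y0
  set C := max C1 (max C2 C3) with hCdef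
  set M := max M1 M2 with hMdef
  have hKpos : 0 < d.K := by linarith [hd.hK]
  have hBa : 0 ≤ |C * M + 2 * C * d.K + C * d.K| := abs_nonneg _
  set B := |C * M + 2 * C * d.K + C * d.K| with hB
  have hq : 0 < -d.U2 y0 / (2 * B + 1) := div_pos (by linarith) (by linarith)
  refine ⟨min 1 (-d.U2 y0 / (2 * B + 1)), lt_min one_pos hq, ?_⟩
  intro t ht s hs y hy ψ hψ
  have hab := abs_lt.2 hψ
  have h1 : |ψ| < 1 := hab.trans_le (min_le_left _ _)
  have h2 : |ψ| * (2 * B + 1) < -d.U2 y0 :=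
    (lt_div_iff₀ (by linarith)).1 (hab.trans_le (min_le_right _ _))
  have hyc := Ioo_subset_Icc_self hy
  have hp : ((t, s, y) : ℝ × ℝ × ℝ) ∈ Icc 0 d.T ×ˢ Icc d.K⁻¹ d.K ×ˢ Icc d.yl d.yu :=
    ⟨Ioo_subset_Icc_self ht, Ioo_subset_Icc_self hs, hyc⟩
  have a1 : |d.U1 y| ≤ C := (hC1 y hyc).trans (le_max_left _ _)
  have a2 : |d.U2 y| ≤ C := (hC2 y hyc).trans ((le_max_left _ _).trans (le_max_right _ _))
  have a3 : |d.U3 y| ≤ C := (hC3 y hyc).trans ((le_max_right _ _).trans (le_max_right _ _))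
  have m1 : |d.wt t s y| ≤ M := (hM1 _ hp).trans (le_max_left _ _)
  have m2 : |d.wh t s y| ≤ M := (hM2 _ hp).trans (le_max_right _ _)
  have b1 := (coef_bound a1 a2 a3 m1 (hd.wt_bdd d.wtY (by simp) t ht s hs y hy)
    (hd.wt_bdd d.wtYY (by simp) t ht s hs y hy)).trans (le_abs_self _)
  have b2 := (coef_bound a1 a2 a3 m2 (hd.wh_bdd d.whY (by simp) t ht s hs y hy)
    (hd.wh_bdd d.whYY (by simp) t ht s hs y hy)).trans (le_abs_self _)
  have hU2 : d.U2 y ≤ d.U2 y0 := hmax hyc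
  unfold HedgeData.wPsiYY
  rw [← hB] at b1 b2
  generalize d.U3 y * d.wt t s y + 2 * d.U2 y * d.wtY t s y + d.U1 y * d.wtYY t s y = P at *
  generalize d.U3 y * d.wh t s y + 2 * d.U2 y * d.whY t s y + d.U1 y * d.whYY t s y = Q at *
  have hψ0 := abs_nonneg ψ
  have c1 : |P * ψ| ≤ B * |ψ| := by
    rw [abs_mul]; exact mul_le_mul_of_nonneg_right b1 hψ0
  have c2 : |Q * ψ ^ 2| ≤ B * |ψ| := by
    rw [abs_mul, abs_pow]
    exact mul_le_mul b2 (by nlinarith) (by positivity) hBa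
  have c3 := neg_abs_le (P * ψ)
  have c4 := le_abs_self (Q * ψ ^ 2)
  nlinarith

/-- **Smooth dependence of the optimal strategy on the uncertainty-aversion parameter.**
There is `ψ₁ > 0` such that for every `(t,s,y) ∈ D`: `w^ψ_yy(t,s,y) < 0` for all
`ψ ∈ (-ψ₁,ψ₁)`; the function `ϑ*(ψ) := V̄_s(t,s) - w^ψ_sy/w^ψ_yy` is infinitely
differentiable on `(-ψ₁,ψ₁)`, satisfies the first-order condition, `ϑ*(0) = V̄_s(t,s)`,
`(dϑ*/dψ)(0) = θ̃(t,s,y)`, and maximises `ϑ ↦ H^ψ(t,s,y;ϑ,ς)` over `ℝ` for each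
`ψ ∈ (0,ψ₁)` and `ς ∈ [0,K]`. -/
theorem smooth_optimal_strategy (d : HedgeData) (hd : d.Assumptions) :
    ∃ ψ₁ > (0:ℝ),
      ∀ t ∈ Ioo (0:ℝ) d.T, ∀ s ∈ Ioo d.K⁻¹ d.K, ∀ y ∈ Ioo d.yl d.yu,
        (∀ ψ ∈ Ioo (-ψ₁) ψ₁, d.wPsiYY ψ t s y < 0) ∧
        ContDiffOn ℝ (⊤ : ℕ∞) (fun ψ => d.Vs t s - d.wPsiSY ψ t s y / d.wPsiYY ψ t s y)
          (Ioo (-ψ₁) ψ₁) ∧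
        (∀ ψ ∈ Ioo (-ψ₁) ψ₁,
          d.wPsiSY ψ t s y
            + ((d.Vs t s - d.wPsiSY ψ t s y / d.wPsiYY ψ t s y) - d.Vs t s)
              * d.wPsiYY ψ t s y = 0) ∧
        d.Vs t s - d.wPsiSY 0 t s y / d.wPsiYY 0 t s y = d.Vs t s ∧
        HasDerivAt (fun ψ => d.Vs t s - d.wPsiSY ψ t s y / d.wPsiYY ψ t s y)
          (d.thetaTilde t s y) 0 ∧
        (∀ ψ ∈ Ioo (0:ℝ) ψ₁, ∀ ς ∈ Icc (0:ℝ) d.K, ∀ ϑ : ℝ,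
          d.Ham ψ t s y ϑ ς
            ≤ d.Ham ψ t s y (d.Vs t s - d.wPsiSY ψ t s y / d.wPsiYY ψ t s y) ς) := by
  obtain ⟨ψ₁, hpos, hneg⟩ := wyy_neg_uniform d hd
  refine ⟨ψ₁, hpos, ?_⟩
  intro t ht s hs y hy
  have hn := hneg t ht s hs y hy
  have hU2 := (hd.U2_neg y).ne
  have hsy0 : d.wPsiSY 0 t s y = 0 := by simp [HedgeData.wPsiSY]
  have hyy0 : d.wPsiYY 0 t s y = d.U2 y := by simp [HedgeData.wPsiYY]
  refine ⟨hn, ?_, ?_, ?_, ?_, ?_⟩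
  · have e1 : ContDiff ℝ (⊤ : ℕ∞) (fun ψ => d.wPsiSY ψ t s y) := by
      unfold HedgeData.wPsiSY; fun_prop
    have e2 : ContDiff ℝ (⊤ : ℕ∞) (fun ψ => d.wPsiYY ψ t s y) := by
      unfold HedgeData.wPsiYY; fun_prop
    exact contDiffOn_const.sub (e1.contDiffOn.div e2.contDiffOn fun ψ hψ => (hn ψ hψ).ne)
  · intro ψ hψ
    have := (hn ψ hψ).ne
    field_simp
    ring
  · rw [hsy0]; simp
  · have e1 : HasDerivAt (fun ψ => d.wPsiSY ψ t s y)
        (-(d.U2 y * d.wtS t s y + d.U1 y * d.wtSY t s y)) 0 := by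
      unfold HedgeData.wPsiSY
      have := ((hasDerivAt_id (0:ℝ)).const_mul
        (-(d.U2 y * d.wtS t s y + d.U1 y * d.wtSY t s y))).add
        (((hasDerivAt_id (0:ℝ)).pow 2).const_mul
          (d.U2 y * d.whS t s y + d.U1 y * d.whSY t s y))
      refine HasDerivAt.congr_deriv this ?_
      simp
    have e2 : DifferentiableAt ℝ (fun ψ => d.wPsiYY ψ t s y) 0 := by
      unfold HedgeData.wPsiYY; fun_prop
    have := (e1.div e2.hasDerivAt (by rw [hyy0]; exact hU2)).const_sub (d.Vs t s)
    refine HasDerivAt.congr_deriv this ?_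
    rw [hsy0, hyy0]
    unfold HedgeData.thetaTilde
    field_simp
    ring
  · intro ψ hψ ς _ ϑ
    have hb := hn ψ ⟨by linarith [hψ.1], hψ.2⟩
    unfold HedgeData.Ham
    generalize d.wPsiSY ψ t s y = a at *
    generalize d.wPsiYY ψ t s y = b at *
    refine add_le_add_right (mul_le_mul_of_nonneg_left ?_ (by positivity)) _
    have key : 2 * (d.Vs t s - a / b - d.Vs t s) * a + (d.Vs t s - a / b - d.Vs t s) ^ 2 * b
        - (2 * (ϑ - d.Vs t s) * a + (ϑ - d.Vs t s) ^ 2 * b)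
        = -b * (ϑ - d.Vs t s + a / b) ^ 2 := by
      have := hb.ne
      field_simp
      ring
    have : 0 ≤ -b * (ϑ - d.Vs t s + a / b) ^ 2 := mul_nonneg (by linarith) (sq_nonneg _)
    linarith
end

section
/- First-order approximate solution property of the HJBI equation along the delta hedge and candidate volatility: there exist constants C > 0 and ψ₀ > 0 such that for all (t,s,y) ∈ D and all ψ ∈ (0,ψ₀), |w^ψ_t(t,s,y) + H^ψ(t,s,y; V̄_s(t,s), σ^ψ(t,s,y))| ≤ C ψ². -/
open Set

/-- The PDEs (with source terms `g̃` and `ĝ`) and terminal/boundary conditions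
satisfied by the correction terms `w̃` and `ŵ`. -/
structure HedgeData.PDEAssumptions (d : HedgeData) : Prop where
  pde_wt : ∀ t ∈ Ioo (0:ℝ) d.T, ∀ s ∈ Ioo d.K⁻¹ d.K, ∀ y ∈ Ioo d.yl d.yu,
    d.wtT t s y + 1 / 2 * (d.sb t s) ^ 2 * s ^ 2 * d.wtSS t s y
      + (d.sb t s * s ^ 2 * d.Vss t s) ^ 2 / (2 * d.f2 t s y (d.sb t s)) = 0
  pde_wh : ∀ t ∈ Ioo (0:ℝ) d.T, ∀ s ∈ Ioo d.K⁻¹ d.K, ∀ y ∈ Ioo d.yl d.yu,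
    d.whT t s y + 1 / 2 * (d.sb t s) ^ 2 * s ^ 2 * d.whSS t s y
      + (1 / 6 * d.sigmaTilde t s y ^ 3 * d.f3 t s y (d.sb t s)
        - 1 / 2 * d.sigmaTilde t s y ^ 2 * s ^ 2 * d.Vss t s
        + d.sigmaTilde t s y * d.sb t s * s ^ 2
            * (d.Vss t s * d.wtY t s y - d.wtSS t s y)
        - d.U2 y / d.U1 y * (1 / 2 * (d.sb t s) ^ 2 * s ^ 2 * d.thetaTilde t s y ^ 2
            - d.sigmaTilde t s y ^ 2 * d.f2 t s y (d.sb t s) * d.wt t s y)) = 0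
  bc_T : ∀ s ∈ Ioo d.K⁻¹ d.K, ∀ y ∈ Ioo d.yl d.yu, d.wt d.T s y = 0 ∧ d.wh d.T s y = 0
  bc_S : ∀ t ∈ Ioo (0:ℝ) d.T, ∀ y ∈ Ioo d.yl d.yu,
    d.wt t d.K⁻¹ y = 0 ∧ d.wt t d.K y = 0 ∧ d.wh t d.K⁻¹ y = 0 ∧ d.wh t d.K y = 0


theorem aux_bmul {x y p q : ℝ} (hx : |x| ≤ p) (hy : |y| ≤ q) : |x * y| ≤ p * q := by
  rw [abs_mul]
  exact mul_le_mul hx hy (abs_nonneg _) ((abs_nonneg _).trans hx)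

theorem aux_badd {x y p q : ℝ} (hx : |x| ≤ p) (hy : |y| ≤ q) : |x + y| ≤ p + q :=
  (abs_add_le x y).trans (add_le_add hx hy)

theorem aux_bneg {x p : ℝ} (hx : |x| ≤ p) : |-x| ≤ p := by
  rwa [abs_neg]

/-- Uniform bound for the polynomial remainder. -/
theorem aux_poly_s6 (M : ℝ) : ∃ C : ℝ, ∀ a b v S p u1 u2 wt wtY wtSS wh whY whT whSS r : ℝ,
    |a| ≤ M → |b| ≤ M → |v| ≤ M → |S| ≤ M → |p| ≤ M → |u1| ≤ M → |u2| ≤ M → |wt| ≤ M →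
    |wtY| ≤ M → |wtSS| ≤ M → |wh| ≤ M → |whY| ≤ M → |whT| ≤ M → |whSS| ≤ M → |r| ≤ M →
    |u1 * r + (u1 * whT
      + -((1 / 2) * v * (b * b) * (u1 + -((u2 * wt + u1 * wtY) * p)
          + (u2 * wh + u1 * whY) * (p * p)))
      + v * a * b * ((u2 * wt + u1 * wtY) + -((u2 * wh + u1 * whY) * p))
      + -((1 / 2) * (2 * (a * b) + b * b * p) * S * (u1 * wtSS))
      + (1 / 2) * ((a + b * p) * (a + b * p)) * S * (u1 * whSS))| ≤ C := by
  have h2 : |(1 / 2 : ℝ)| ≤ 1 / 2 := by norm_num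
  have h2' : |(2 : ℝ)| ≤ 2 := by norm_num
  apply Exists.intro
  intro a b v S p u1 u2 wt wtY wtSS wh whY whT whSS r ha hb hv hS hp hu1 hu2 hwt hwtY hwtSS
    hwh hwhY hwhT hwhSS hr
  have hA := aux_badd (aux_bmul hu2 hwt) (aux_bmul hu1 hwtY)
  have hB := aux_badd (aux_bmul hu2 hwh) (aux_bmul hu1 hwhY)
  have hs := aux_badd ha (aux_bmul hb hp)
  have e1 := aux_bneg (aux_bmul (aux_bmul (aux_bmul h2 hv) (aux_bmul hb hb))
    (aux_badd (aux_badd hu1 (aux_bneg (aux_bmul hA hp))) (aux_bmul hB (aux_bmul hp hp))))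
  have e2 := aux_bmul (aux_bmul (aux_bmul hv ha) hb) (aux_badd hA (aux_bneg (aux_bmul hB hp)))
  have e3 := aux_bneg (aux_bmul (aux_bmul (aux_bmul h2
    (aux_badd (aux_bmul h2' (aux_bmul ha hb)) (aux_bmul (aux_bmul hb hb) hp))) hS)
    (aux_bmul hu1 hwtSS))
  have e4 := aux_bmul (aux_bmul (aux_bmul h2 (aux_bmul hs hs)) hS) (aux_bmul hu1 hwhSS)
  exact aux_badd (aux_bmul hu1 hr)
    (aux_badd (aux_badd (aux_badd (aux_badd (aux_bmul hu1 hwhT) e1) e2) e3) e4)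

/-- Second order Taylor estimate. -/
theorem aux_taylor (f f1 f2 f3 : ℝ → ℝ) (K a x : ℝ)
    (h1 : ∀ z, HasDerivAt f (f1 z) z) (h2 : ∀ z, HasDerivAt f1 (f2 z) z)
    (h3 : ∀ z, HasDerivAt f2 (f3 z) z) (ha : a ∈ Icc (0:ℝ) K) (hx : x ∈ Icc (0:ℝ) K)
    (hb : ∀ z ∈ Icc (0:ℝ) K, |f3 z| ≤ K) (fa : f a = 0) (f1a : f1 a = 0) :
    |f x - 1 / 2 * f2 a * (x - a) ^ 2| ≤ K * |x - a| ^ 3 := by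
  have hK : 0 ≤ K := ha.1.trans ha.2
  have hsub : uIcc a x ⊆ Icc (0:ℝ) K := uIcc_subset_Icc ha hx
  have hcv : Convex ℝ (uIcc a x) := convex_uIcc a x
  have haS : a ∈ uIcc a x := left_mem_uIcc
  have hdist : ∀ z ∈ uIcc a x, |z - a| ≤ |x - a| := fun z hz => abs_sub_left_of_mem_uIcc hz
  have s2 : ∀ z ∈ uIcc a x, |f2 z - f2 a| ≤ K * |x - a| := by
    intro z hz
    have := hcv.norm_image_sub_le_of_norm_hasDerivWithin_le (f := f2) (f' := f3) (C := K)
      (fun w _ => (h3 w).hasDerivWithinAt) (fun w hw => hb w (hsub hw)) haS hz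
    simp only [Real.norm_eq_abs] at this
    exact this.trans (mul_le_mul_of_nonneg_left (hdist z hz) hK)
  have s1 : ∀ z ∈ uIcc a x, |f1 z - f2 a * (z - a)| ≤ K * |x - a| * |x - a| := by
    intro z hz
    have := hcv.norm_image_sub_le_of_norm_hasDerivWithin_le
      (f := fun z => f1 z - f2 a * (z - a)) (f' := fun z => f2 z - f2 a) (C := K * |x - a|)
      (fun w _ => by
        have := (h2 w).sub (((hasDerivAt_id w).sub_const a).const_mul (f2 a))
        simp only [mul_one] at this
        exact this.hasDerivWithinAt) (fun w hw => s2 w hw) haS hz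
    simp only [Real.norm_eq_abs, f1a, sub_self, mul_zero, sub_zero] at this
    exact this.trans (mul_le_mul_of_nonneg_left (hdist z hz) (by positivity))
  have := hcv.norm_image_sub_le_of_norm_hasDerivWithin_le
      (f := fun z => f z - 1 / 2 * f2 a * (z - a) ^ 2)
      (f' := fun z => f1 z - f2 a * (z - a)) (C := K * |x - a| * |x - a|)
      (fun w _ => by
        have := (h1 w).sub ((((hasDerivAt_id w).sub_const a).pow 2).const_mul (1 / 2 * f2 a))
        refine (this.congr_deriv ?_).hasDerivWithinAt
        simp
        ring) (fun w hw => s1 w hw) haS right_mem_uIcc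
  simp only [Real.norm_eq_abs, fa, sub_self] at this
  norm_num at this
  norm_num
  calc _ ≤ _ := this
    _ = _ := by ring

/-- **First-order approximate solution property of the HJBI equation along the delta hedge
and candidate volatility:** there are `C > 0` and `ψ₀ > 0` such that for all `(t,s,y) ∈ D`
and `ψ ∈ (0,ψ₀)`, `|w^ψ_t + H^ψ(t,s,y; V̄_s(t,s), σ^ψ(t,s,y))| ≤ C ψ²`. -/
theorem hjbi_first_order (d : HedgeData) (hd : d.Assumptions) (hpde : d.PDEAssumptions) :
    ∃ C > (0:ℝ), ∃ ψ₀ > (0:ℝ),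
      ∀ t ∈ Ioo (0:ℝ) d.T, ∀ s ∈ Ioo d.K⁻¹ d.K, ∀ y ∈ Ioo d.yl d.yu, ∀ ψ ∈ Ioo (0:ℝ) ψ₀,
        |d.wPsiT ψ t s y + d.Ham ψ t s y (d.Vs t s) (d.sigmaPsi ψ t s y)| ≤ C * ψ ^ 2 := by
  obtain ⟨hT, hK, heps, hy, sb_mem, sb_lb, sb_ub, -, -, -, -, Vss_bdd, fd1, fd2, fd3, -, -, -,
    f_min, f2_bdd, f34, -, Ud2, Ud3, -, -, -, wt_cont, wh_cont, -, -, -, -, wt_bdd, wh_bdd⟩ := hd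
  have pde := hpde.pde_wt
  have hK0 : 0 < d.K := by linarith
  have hcomp : IsCompact (Icc 0 d.T ×ˢ Icc d.K⁻¹ d.K ×ˢ Icc d.yl d.yu) :=
    isCompact_Icc.prod (isCompact_Icc.prod isCompact_Icc)
  obtain ⟨M1, hM1⟩ := hcomp.exists_bound_of_continuousOn wt_cont
  obtain ⟨M2, hM2⟩ := hcomp.exists_bound_of_continuousOn wh_cont
  obtain ⟨M3, hM3⟩ := (isCompact_Icc (a := d.yl) (b := d.yu)).exists_bound_of_continuousOn
    (f := d.U1) (fun y _ => (Ud2 y).continuousAt.continuousWithinAt)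
  obtain ⟨M4, hM4⟩ := (isCompact_Icc (a := d.yl) (b := d.yu)).exists_bound_of_continuousOn
    (f := d.U2) (fun y _ => (Ud3 y).continuousAt.continuousWithinAt)
  obtain ⟨M, hM⟩ : ∃ M, M = |M1| + |M2| + |M3| + |M4| + d.K + d.K ^ 2 + d.K ^ 3
      + d.K * (d.K ^ 3) ^ 3 + 1 := ⟨_, rfl⟩
  have p1 := abs_nonneg M1
  have p2 := abs_nonneg M2
  have p3 := abs_nonneg M3
  have p4 := abs_nonneg M4
  have p5 : 0 < d.K ^ 2 := by positivity
  have p6 : 0 < d.K ^ 3 := by positivity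
  have p7 : 0 < d.K * (d.K ^ 3) ^ 3 := by positivity
  obtain ⟨C, hC⟩ := aux_poly_s6 M
  refine ⟨max C 1, lt_max_of_lt_right one_pos, min 1 (d.eps / d.K ^ 3),
    lt_min one_pos (by positivity), ?_⟩
  intro t ht s hs y hyy ψ hψ
  have hψ0 : 0 < ψ := hψ.1
  have hψ1 : ψ < 1 := hψ.2.trans_le (min_le_left _ _)
  have hψ2 : ψ * d.K ^ 3 < d.eps := by
    rw [← lt_div_iff₀ p6]; exact hψ.2.trans_le (min_le_right _ _)
  have ht' := Ioo_subset_Icc_self ht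
  have hs' := Ioo_subset_Icc_self hs
  have hy' := Ioo_subset_Icc_self hyy
  have hsbm := sb_mem t ht' s hs'
  have hlb := sb_lb t ht' s hs
  have hub := sb_ub t ht' s hs
  have hv := Vss_bdd t ht s hs
  obtain ⟨fa, f1a⟩ := f_min t ht s hs y hyy
  have hF := (f2_bdd t ht s hs y hyy _ hsbm).1
  have hf3 := fun z hz => (f34 t ht s hs y hyy z hz).1
  have e1 := pde t ht s hs y hyy
  have bwt := hM1 (t, s, y) ⟨ht', hs', hy'⟩
  have bwh := hM2 (t, s, y) ⟨ht', hs', hy'⟩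
  have bU1 := hM3 y hy'
  have bU2 := hM4 y hy'
  have bwtY := wt_bdd d.wtY (by simp) t ht s hs y hyy
  have bwtSS := wt_bdd d.wtSS (by simp) t ht s hs y hyy
  have bwhY := wh_bdd d.whY (by simp) t ht s hs y hyy
  have bwhT := wh_bdd d.whT (by simp) t ht s hs y hyy
  have bwhSS := wh_bdd d.whSS (by simp) t ht s hs y hyy
  simp only [Real.norm_eq_abs] at bwt bwh bU1 bU2
  have hFpos : 0 < d.f2 t s y (d.sb t s) := lt_of_lt_of_le (by positivity) hF
  have hFb : d.f2 t s y (d.sb t s) * d.sigmaTilde t s y = d.sb t s * (s ^ 2 * d.Vss t s) := by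
    unfold HedgeData.sigmaTilde
    field_simp
  have hasb : |d.sb t s| ≤ d.K := by rw [abs_of_nonneg hsbm.1]; exact hsbm.2
  have hb : |d.sigmaTilde t s y| ≤ d.K ^ 3 := by
    have h1 : |d.f2 t s y (d.sb t s) * d.sigmaTilde t s y| ≤ d.K * d.K := by
      rw [hFb]; exact aux_bmul hasb hv
    rw [abs_mul, abs_of_pos hFpos] at h1
    have h2 : 1 / d.K * |d.sigmaTilde t s y| ≤ d.K * d.K :=
      (mul_le_mul_of_nonneg_right hF (abs_nonneg _)).trans h1
    rw [one_div, inv_mul_le_iff₀ hK0] at h2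
    linarith [h2, (by ring : d.K * (d.K * d.K) = d.K ^ 3)]
  have hsS : |s ^ 2| ≤ d.K ^ 2 := by
    have h0 : 0 < s := lt_trans (by positivity) hs.1
    rw [abs_of_pos (by positivity)]
    exact pow_le_pow_left₀ h0.le hs.2.le 2
  have hpde2 : d.wtT t s y = -(1 / 2 * (d.sb t s) ^ 2 * s ^ 2 * d.wtSS t s y)
      - 1 / 2 * d.f2 t s y (d.sb t s) * d.sigmaTilde t s y ^ 2 := by
    have h : (d.sb t s * s ^ 2 * d.Vss t s) ^ 2 / (2 * d.f2 t s y (d.sb t s))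
        = 1 / 2 * d.f2 t s y (d.sb t s) * d.sigmaTilde t s y ^ 2 := by
      unfold HedgeData.sigmaTilde
      field_simp
    linarith
  have hbψ : |d.sigmaTilde t s y * ψ| ≤ d.eps := by
    rw [abs_mul, abs_of_pos hψ0]
    nlinarith
  have hmem : d.sigmaPsi ψ t s y ∈ Icc (0:ℝ) d.K := by
    unfold HedgeData.sigmaPsi
    rw [abs_le] at hbψ
    constructor <;> linarith [hbψ.1, hbψ.2]
  have htay := aux_taylor _ _ _ _ d.K _ _ (fd1 t s y) (fd2 t s y) (fd3 t s y) hsbm hmem hf3 fa f1a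
  have hdiff : d.sigmaPsi ψ t s y - d.sb t s = d.sigmaTilde t s y * ψ := by
    unfold HedgeData.sigmaPsi; ring
  rw [hdiff] at htay
  obtain ⟨r, hr⟩ : ∃ r, r = (d.f t s y (d.sigmaPsi ψ t s y)
    - 1 / 2 * d.f2 t s y (d.sb t s) * (d.sigmaTilde t s y * ψ) ^ 2) / ψ ^ 3 := ⟨_, rfl⟩
  have hrb : |r| ≤ d.K * (d.K ^ 3) ^ 3 := by
    rw [hr, abs_div, abs_of_pos (by positivity : 0 < ψ ^ 3), div_le_iff₀ (by positivity)]
    refine htay.trans ?_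
    rw [abs_mul, abs_of_pos hψ0, mul_pow, ← mul_assoc]
    gcongr
  have hf : d.f t s y (d.sigmaPsi ψ t s y) = r * ψ ^ 3
      + 1 / 2 * d.f2 t s y (d.sb t s) * (d.sigmaTilde t s y * ψ) ^ 2 := by
    rw [hr]; field_simp; ring
  have key := hC (d.sb t s) (d.sigmaTilde t s y) (s ^ 2 * d.Vss t s) (s ^ 2) ψ (d.U1 y) (d.U2 y)
    (d.wt t s y) (d.wtY t s y) (d.wtSS t s y) (d.wh t s y) (d.whY t s y) (d.whT t s y)
    (d.whSS t s y) r (by linarith) (by linarith) (by linarith) (by linarith)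
    (by rw [abs_of_pos hψ0]; linarith)
    (by linarith [le_abs_self M3]) (by linarith [le_abs_self M4])
    (by linarith [le_abs_self M1]) (by linarith) (by linarith)
    (by linarith [le_abs_self M2]) (by linarith) (by linarith) (by linarith) (by linarith)
  have hsplit : 1 / ψ * d.U1 y * d.f t s y (d.sigmaPsi ψ t s y) = d.U1 y * r * ψ ^ 2
      + 1 / 2 * d.U1 y * (d.f2 t s y (d.sb t s) * d.sigmaTilde t s y)
        * d.sigmaTilde t s y * ψ := by
    rw [hf]; field_simp
  have hpde3 : d.wtT t s y = -(1 / 2 * (d.sb t s) ^ 2 * s ^ 2 * d.wtSS t s y)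
      - 1 / 2 * (d.f2 t s y (d.sb t s) * d.sigmaTilde t s y) * d.sigmaTilde t s y := by
    rw [hpde2]; ring
  have hE : ∀ X R : ℝ, X = R * ψ ^ 2 → |R| ≤ C → |X| ≤ max C 1 * ψ ^ 2 := by
    intro X R h1 h2
    rw [h1, abs_mul, abs_of_pos (by positivity : 0 < ψ ^ 2)]
    exact mul_le_mul_of_nonneg_right (h2.trans (le_max_left _ _)) (by positivity)
  refine hE _ _ ?_ key
  unfold HedgeData.Ham
  rw [hsplit]
  unfold HedgeData.wPsiT HedgeData.wPsiY HedgeData.wPsiSS HedgeData.sigmaPsi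
  rw [hpde3, hFb]
  ring
end
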